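/- For every n ≥ 1, the coefficient of x^{n-1} in the matrix-valued polynomial Q_n(x) = P_n(x)·Γ_n^{-1} is the matrix Q^n_{n-1} whose only nonzero entries are (Q^n_{n-1})_{j,j+1} = -(q/2)·(1-q^{2n})(1-q^{2j+2}) / ((1-q²)(1-q^{2n+2j+2})) for 0 ≤ j ≤ 2ℓ-1 and (Q^n_{n-1})_{j,j-1} = -(q/2)·(1-q^{2n})(1-q^{4ℓ-2j+2}) / ((1-q²)(1-q^{4ℓ-2j+2n+2})) for 1 ≤ j ≤ 2ℓ. -/

import Mathlib

open Finset Polynomial MeasureTheory Matrix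
open scoped BigOperators ComplexOrder

noncomputable section

/-- q-shifted factorial `(a;p)_n`. -/
def qp (a p : ℂ) (n : ℕ) : ℂ := ∏ j ∈ Finset.range n, (1 - a * p ^ j)

/-- q-Racah polynomial `R_n(μ(x);α,β,γ,δ;p)`. -/
def qRacah (p α β γ δ : ℂ) (n x : ℕ) : ℂ :=
  ∑ k ∈ Finset.range (min n x + 1),
    qp (p ^ (-(n : ℤ))) p k * qp (α * β * p ^ (n + 1)) p k *
        qp (p ^ (-(x : ℤ))) p k * qp (γ * δ * p ^ (x + 1)) p k /
      (qp (α * p) p k * qp (β * δ * p) p k * qp (γ * p) p k * qp p p k) * p ^ k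

/-- `IsUltra C` says that for each base `p`, parameter `β` and degree `n`, `C p β n` is
the continuous q-ultraspherical polynomial: it has degree at most `n` and its values at
`(z+z⁻¹)/2` are given by the symmetric Laurent sum. -/
def IsUltra (C : ℂ → ℂ → ℕ → Polynomial ℂ) : Prop :=
  ∀ (p β : ℂ) (n : ℕ),
    (C p β n).degree ≤ (n : ℕ) ∧
      ∀ z : ℂ, z ≠ 0 →
        (C p β n).eval ((z + z⁻¹) / 2) =
          ∑ r ∈ Finset.range (n + 1),
            qp β p r * qp β p (n - r) / (qp p p r * qp p p (n - r)) * z ^ ((n : ℤ) - 2 * r)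

/-- The matrix-valued polynomial `P_n` (entries in `Polynomial ℂ`); here `L = 2ℓ`. -/
def Pm (q : ℂ) (L : ℕ) (C : ℂ → ℂ → ℕ → Polynomial ℂ) (n : ℕ) :
    Matrix (Fin (L + 1)) (Fin (L + 1)) (Polynomial ℂ) :=
  Matrix.of fun i j =>
    ∑ k ∈ Finset.Icc (i : ℕ) (min L (n + (j : ℕ))),
      Polynomial.C
          ((-1 : ℂ) ^ k *
            q ^ ((n : ℤ) + (2 * (k : ℤ) + 1) * ((k : ℤ) - ((i : ℕ) : ℤ)) +
                ((j : ℕ) : ℤ) * (2 * (k : ℤ) + 1) + 2 * (k : ℤ) * ((L : ℤ) + (n : ℤ) + 1) -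
                (k : ℤ) ^ 2) *
            (qp (q ^ 2) (q ^ 2) k * qp (q ^ 2) (q ^ 2) (k + (i : ℕ)) /
              (qp (q ^ 2) (q ^ 2) (2 * k) * qp (q ^ 2) (q ^ 2) (i : ℕ))) *
            (qp (q ^ (-(2 * (L : ℤ)))) (q ^ 2) k *
                qp (q ^ (-(2 * ((j : ℕ) : ℤ) + 2 * (n : ℤ)))) (q ^ 2) k /
              (qp (q ^ 2) (q ^ 2) k * qp (q ^ (2 * (L : ℤ) + 4)) (q ^ 2) k)) *
            (qp (q ^ 2) (q ^ 2) (n + (j : ℕ) - k) /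
              qp (q ^ (4 * (k : ℤ) + 4)) (q ^ 2) (n + (j : ℕ) - k)) *
            qRacah (q ^ 2) 1 1 (q ^ (-(2 * (n : ℤ) + 2 * ((j : ℕ) : ℤ) + 2)))
              (q ^ (-(2 * (L : ℤ) + 2))) k (j : ℕ)) *
        (C (q ^ 2) (q ^ (-(2 * (k : ℤ)))) (k - (i : ℕ)) *
          C (q ^ 2) (q ^ (2 * (k : ℤ) + 2)) (n + (j : ℕ) - k))

/-- Evaluation of the matrix-valued polynomial `P_n` at a point. -/
def evP (q : ℂ) (L : ℕ) (C : ℂ → ℂ → ℕ → Polynomial ℂ) (n : ℕ) (x : ℂ) :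
    Matrix (Fin (L + 1)) (Fin (L + 1)) ℂ :=
  (Pm q L C n).map (Polynomial.eval x)

/-- The coefficients `α_t(m,n)` of the weight. -/
def alphaC (q : ℂ) (L m n t : ℕ) : ℂ :=
  q ^ (2 * (n : ℤ) * ((L : ℤ) + 1) - (n : ℤ) ^ 2 - (2 * (L : ℤ) + 3) * (t : ℤ) + (t : ℤ) ^ 2 -
      (L : ℤ) + (m : ℤ)) *
    ((1 - q ^ (2 * (L : ℤ) + 2)) / (1 - q ^ (2 * (m : ℤ) + 2))) *
    (qp (q ^ 2) (q ^ 2) (L - n) * qp (q ^ 2) (q ^ 2) n / qp (q ^ 2) (q ^ 2) L) *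
    ((-1 : ℂ) ^ ((m : ℤ) - (t : ℤ)) * qp (q ^ (2 * (m : ℤ) - 2 * (L : ℤ))) (q ^ 2) (n - t) /
      qp (q ^ (2 * (m : ℤ) + 4)) (q ^ 2) (n - t)) *
    (qp (q ^ (2 * (L : ℤ) + 4 - 2 * (t : ℤ))) (q ^ 2) t / qp (q ^ 2) (q ^ 2) t)

/-- The matrix weight `W(x)`. -/
def Wm (q : ℂ) (L : ℕ) (x : ℂ) : Matrix (Fin (L + 1)) (Fin (L + 1)) ℂ :=
  Matrix.of fun i j =>
    ∑ t ∈ Finset.range (max (i : ℕ) (j : ℕ) + 1),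
      alphaC q L (min (i : ℕ) (j : ℕ)) (max (i : ℕ) (j : ℕ)) t *
        (Polynomial.Chebyshev.U ℂ
            ((min (i : ℕ) (j : ℕ) : ℤ) + (max (i : ℕ) (j : ℕ) : ℤ) - 2 * (t : ℤ))).eval x

/-- The antidiagonal involution `J`. -/
def Jm (L : ℕ) : Matrix (Fin (L + 1)) (Fin (L + 1)) ℂ :=
  Matrix.of fun i j => if (i : ℕ) + (j : ℕ) = L then 1 else 0

/-- The diagonal leading-coefficient matrix `Γ_n`. -/
def Gam (q : ℂ) (L n : ℕ) : Matrix (Fin (L + 1)) (Fin (L + 1)) ℂ :=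
  Matrix.diagonal fun i =>
    2 ^ n * q ^ n * qp (q ^ (2 * ((i : ℕ) : ℤ) + 2)) (q ^ 2) n *
        qp (q ^ (2 * (L : ℤ) - 2 * ((i : ℕ) : ℤ) + 2)) (q ^ 2) n /
      (qp (q ^ 2) (q ^ 2) n * qp (q ^ (2 * (L : ℤ) + 4)) (q ^ 2) n)

/-- The squared-norm matrix `G_m`. -/
def Gmat (q : ℂ) (L m : ℕ) : Matrix (Fin (L + 1)) (Fin (L + 1)) ℂ :=
  Matrix.diagonal fun i =>
    q ^ (2 * (m : ℤ) - (L : ℤ)) * (1 - q ^ (2 * (L : ℤ) + 2)) ^ 2 /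
      ((1 - q ^ (2 * (m : ℤ) + 2 * ((i : ℕ) : ℤ) + 2)) *
        (1 - q ^ (2 * (L : ℤ) - 2 * ((i : ℕ) : ℤ) + 2 * (m : ℤ) + 2)))

/-- The unipotent lower triangular matrix `L(x)` of the LDU decomposition. -/
def Lm (q : ℂ) (L : ℕ) (C : ℂ → ℂ → ℕ → Polynomial ℂ) (x : ℂ) :
    Matrix (Fin (L + 1)) (Fin (L + 1)) ℂ :=
  Matrix.of fun m k =>
    if (k : ℕ) ≤ (m : ℕ) then
      q ^ (((m : ℕ) : ℤ) - ((k : ℕ) : ℤ)) * qp (q ^ 2) (q ^ 2) (m : ℕ) *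
          qp (q ^ 2) (q ^ 2) (2 * (k : ℕ) + 1) /
          (qp (q ^ 2) (q ^ 2) ((m : ℕ) + (k : ℕ) + 1) * qp (q ^ 2) (q ^ 2) (k : ℕ)) *
        (C (q ^ 2) (q ^ (2 * (k : ℕ) + 2)) ((m : ℕ) - (k : ℕ))).eval x
    else 0

/-- The claimed inverse of `L(x)`. -/
def Linv (q : ℂ) (L : ℕ) (C : ℂ → ℂ → ℕ → Polynomial ℂ) (x : ℂ) :
    Matrix (Fin (L + 1)) (Fin (L + 1)) ℂ :=
  Matrix.of fun k n =>
    if (n : ℕ) ≤ (k : ℕ) then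
      q ^ ((2 * ((k : ℕ) : ℤ) + 1) * (((k : ℕ) : ℤ) - ((n : ℕ) : ℤ))) *
          qp (q ^ 2) (q ^ 2) (k : ℕ) * qp (q ^ 2) (q ^ 2) ((k : ℕ) + (n : ℕ)) /
          (qp (q ^ 2) (q ^ 2) (2 * (k : ℕ)) * qp (q ^ 2) (q ^ 2) (n : ℕ)) *
        (C (q ^ 2) (q ^ (-(2 * ((k : ℕ) : ℤ)))) ((k : ℕ) - (n : ℕ))).eval x
    else 0

/-- The constants `c_k(ℓ)`. -/
def ckC (q : ℂ) (L k : ℕ) : ℂ :=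
  q ^ (-(L : ℤ)) / 4 * (1 - q ^ (4 * k + 2)) * qp (q ^ 2) (q ^ 2) (L + k + 1) *
      qp (q ^ 2) (q ^ 2) (L - k) * qp (q ^ 2) (q ^ 2) k ^ 4 /
    (qp (q ^ 2) (q ^ 2) (2 * k + 1) ^ 2 * qp (q ^ 2) (q ^ 2) L ^ 2)

/-- The diagonal part `T(x)` of the LDU decomposition. -/
def Tm (q : ℂ) (L : ℕ) (x : ℂ) : Matrix (Fin (L + 1)) (Fin (L + 1)) ℂ :=
  Matrix.diagonal fun k =>
    ckC q L (k : ℕ) *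
      (4 * ∏ j ∈ Finset.Icc 1 (k : ℕ), (1 - 2 * (2 * x ^ 2 - 1) * q ^ (2 * j) + q ^ (4 * j)))

/-- The coefficient matrix `M₁(z)` of the q-difference operator `D₁`. -/
def M1f (q : ℂ) (L : ℕ) (z : ℂ) : Matrix (Fin (L + 1)) (Fin (L + 1)) ℂ :=
  Matrix.of fun i j =>
    if (j : ℕ) = (i : ℕ) + 1 then
      -(q ^ (1 - ((i : ℕ) : ℤ)) * (1 - q ^ (2 * (i : ℕ) + 2)) / (1 - q ^ 2) ^ 2 *
        (z / (1 - z ^ 2)))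
    else if (j : ℕ) = (i : ℕ) then
      q ^ (1 - ((i : ℕ) : ℤ)) / (1 - q ^ 2) ^ 2 *
        ((1 - q ^ (2 * (i : ℕ) + 2) * z ^ 2) / (1 - z ^ 2))
    else 0

/-- `M₂(z) = J M₁(z) J`. -/
def M2f (q : ℂ) (L : ℕ) (z : ℂ) : Matrix (Fin (L + 1)) (Fin (L + 1)) ℂ :=
  Jm L * M1f q L z * Jm L

/-- The eigenvalue matrix `Λ_n(1)`. -/
def Lam1 (q : ℂ) (L n : ℕ) : Matrix (Fin (L + 1)) (Fin (L + 1)) ℂ :=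
  Matrix.diagonal fun j =>
    (q ^ (-((j : ℕ) : ℤ) - (n : ℤ) - 1) + q ^ (((j : ℕ) : ℤ) + (n : ℤ) + 1)) / (q⁻¹ - q) ^ 2

/-- The eigenvalue matrix `Λ_n(2) = J Λ_n(1) J`. -/
def Lam2 (q : ℂ) (L n : ℕ) : Matrix (Fin (L + 1)) (Fin (L + 1)) ℂ :=
  Jm L * Lam1 q L n * Jm L

/-- The diagonal coefficient matrix `K₁(z)` of the decoupled operator. -/
def K1f (q : ℂ) (L : ℕ) (z : ℂ) : Matrix (Fin (L + 1)) (Fin (L + 1)) ℂ :=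
  Matrix.diagonal fun i =>
    q ^ (1 - ((i : ℕ) : ℤ)) / (1 - q ^ 2) ^ 2 *
      ((1 - q ^ (2 * (i : ℕ) + 2) * z ^ 2) / (1 - z ^ 2))

/-- The symmetric Laurent polynomial `Ĉ_k(z;β|p)`. -/
def Chat (p β : ℂ) (k : ℕ) (z : ℂ) : ℂ :=
  ∑ r ∈ Finset.range (k + 1),
    qp β p r * qp β p (k - r) / (qp p p r * qp p p (k - r)) * z ^ ((k : ℤ) - 2 * (r : ℤ))

/-- The matrix polynomials `R_n(x) = L(x)ᵀ P_n(x) Γ_n⁻¹`. -/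
def Rmat (q : ℂ) (L : ℕ) (C : ℂ → ℂ → ℕ → Polynomial ℂ) (n : ℕ) (x : ℂ) :
    Matrix (Fin (L + 1)) (Fin (L + 1)) ℂ :=
  (Lm q L C x)ᵀ * evP q L C n x * (Gam q L n)⁻¹


lemma qp_succ (a p : ℂ) (n : ℕ) : qp a p (n+1) = qp a p n * (1 - a * p^n) := by
  simp [qp, Finset.prod_range_succ]
lemma qp_zero (a p : ℂ) : qp a p 0 = 1 := by simp [qp]
lemma qp_succ' (a p : ℂ) (n : ℕ) : qp a p (n+1) = (1 - a) * qp (a*p) p n := by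
  simp only [qp, Finset.prod_range_succ']
  rw [mul_comm]
  simp only [pow_zero, mul_one]
  congr 1
  apply Finset.prod_congr rfl
  intro i _
  ring
/-- `p` is nonzero and not a root of unity. -/
def Good (p : ℂ) : Prop := p ≠ 0 ∧ ∀ m : ℤ, m ≠ 0 → p ^ m ≠ 1

lemma Good.pow {p : ℂ} (h : Good p) (m : ℕ) : 1 - p^(m+1) ≠ 0 := by
  have := h.2 (m+1) (by omega)
  rw [sub_ne_zero]
  intro h2
  apply this
  rw [h2]; norm_cast
lemma Good.zpow {p : ℂ} (h : Good p) (m : ℤ) (hm : m ≠ 0) : 1 - p^m ≠ 0 := by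
  rw [sub_ne_zero]; exact (h.2 m hm).symm
lemma Good.plus {p : ℂ} (h : Good p) (m : ℕ) : 1 + p^m ≠ 0 := by
  rcases m with _ | m
  · norm_num
  · intro h2
    apply h.pow (2*m+1)
    linear_combination (1 - p^(m+1)) * h2
/-- q-factorial. -/
def Ff (p : ℂ) (k : ℕ) : ℂ := qp p p k
lemma Ff_zero (p : ℂ) : Ff p 0 = 1 := by simp [Ff, qp]
lemma Ff_succ (p : ℂ) (k : ℕ) : Ff p (k+1) = Ff p k * (1 - p^(k+1)) := by
  simp only [Ff, qp_succ]; ring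
lemma Ff_ne {p : ℂ} (h : Good p) (k : ℕ) : Ff p k ≠ 0 := by
  induction k with
  | zero => simp [Ff_zero]
  | succ k ih => rw [Ff_succ]; exact mul_ne_zero ih (h.pow k)
lemma qp_up (p : ℂ) (a n : ℕ) : qp (p^(a+1)) p n * Ff p a = Ff p (a+n) := by
  induction n with
  | zero => simp [qp_zero]
  | succ n ih => rw [qp_succ, ← add_assoc, Ff_succ, ← ih]; ring
lemma qp_up' {p : ℂ} (h : Good p) (a n : ℕ) : qp (p^(a+1)) p n = Ff p (a+n) / Ff p a := by
  rw [eq_div_iff (Ff_ne h a), qp_up]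
lemma qp_down {q p : ℂ} (hpq : p = q^2) (h : Good p) (a m : ℕ) (hm : m ≤ a) :
    qp (p^(-(a:ℤ))) p m = (-1)^m * q^(-(2*(a:ℤ)*m) + m*(m-1)) * Ff p a / Ff p (a-m) := by
  have hq : q ≠ 0 := by rintro rfl; apply h.1; simp [hpq]
  induction m with
  | zero => simp [qp_zero, Ff_ne h]
  | succ m ih =>
    rw [qp_succ, ih (by omega)]
    obtain ⟨b, rfl⟩ : ∃ b, a = m + 1 + b := ⟨a - (m+1), by omega⟩
    have e1 : m + 1 + b - m = b + 1 := by omega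
    have e2 : m + 1 + b - (m+1) = b := by omega
    rw [e1, e2, Ff_succ]
    have h1 := h.pow b
    have h2 := Ff_ne h b
    have e3 : q^(-(2*((m+1+b:ℕ):ℤ)*((m+1:ℕ):ℤ)) + ((m+1:ℕ):ℤ)*(((m+1:ℕ):ℤ)-1)) =
      q^(-(2*((m+1+b:ℕ):ℤ)*m) + m*(m-1)) * (p^(b+1))⁻¹ := by
      rw [hpq, ← pow_mul, ← zpow_natCast, ← _root_.zpow_neg, ← zpow_add₀ hq]
      congr 1; push_cast; ring
    have e4 : p ^ (-((m+1+b:ℕ):ℤ)) * p^m = (p^(b+1))⁻¹ := by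
      rw [← zpow_natCast p m, ← zpow_add₀ h.1, ← zpow_natCast, ← _root_.zpow_neg]
      congr 1; push_cast; ring
    rw [e3, e4]
    have h3 : p^(b+1) ≠ 0 := pow_ne_zero _ h.1
    generalize q^(-(2*((m+1+b:ℕ):ℤ)*m) + m*(m-1)) = Z
    generalize p^(b+1) = Y at *
    field_simp
    ring
lemma qp_down_ne {p : ℂ} (h : Good p) (a m : ℕ) (hm : m ≤ a) : qp (p^(-(a:ℤ))) p m ≠ 0 := by
  unfold qp
  rw [Finset.prod_ne_zero_iff]
  intro i hi
  rw [Finset.mem_range] at hi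
  rw [← zpow_natCast p i, ← zpow_add₀ h.1]
  apply h.zpow; omega
lemma qp_down_zero {p : ℂ} (h : Good p) (a m : ℕ) (hm : a < m) : qp (p^(-(a:ℤ))) p m = 0 := by
  unfold qp
  rw [Finset.prod_eq_zero_iff]
  refine ⟨a, by simpa using hm, ?_⟩
  rw [← zpow_natCast p a, ← zpow_add₀ h.1]
  simp

/-- phi -/
def ph (p : ℂ) (s k : ℕ) : ℂ := qp (p^(-(k:ℤ))) p s * qp (p^(k+1)) p s
lemma ph_zero (p : ℂ) (k : ℕ) : ph p 0 k = 1 := by simp [ph, qp_zero]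
lemma ph_gt {p : ℂ} (h : Good p) (s k : ℕ) (hs : k < s) : ph p s k = 0 := by
  rw [ph, qp_down_zero h k s hs, zero_mul]
lemma ph_succ {p : ℂ} (s k : ℕ) : ph p (s+1) k =
    ph p s k * (1 - p^(-(k:ℤ)) * p^s) * (1 - p^(k+1)*p^s) := by
  simp only [ph, qp_succ]; ring
lemma ph_diff {p : ℂ} (h : Good p) (s k : ℕ) : ph p (s+1) (k+1) - ph p (s+1) k =
   -(1-p^(s+1)) * (p^(k+1))⁻¹ * (1-p^(2*k+2)) * (qp (p^(-(k:ℤ))) p s * qp (p^(k+2)) p s) := by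
  have hp := h.1
  have e1 : p^(-((k+1:ℕ):ℤ)) * p = p^(-(k:ℤ)) := by
    rw [← zpow_add_one₀ hp]; congr 1; push_cast; ring
  have e2 : p^(k+1)*p = p^(k+2) := by ring
  have a1 : ph p (s+1) (k+1) = ((1 - p^(-((k+1:ℕ):ℤ))) * qp (p^(-(k:ℤ))) p s) *
     (qp (p^(k+2)) p s * (1 - p^(k+2)*p^s)) := by
    rw [ph, qp_succ', e1, qp_succ]
  have a2 : ph p (s+1) k = (qp (p^(-(k:ℤ))) p s * (1 - p^(-(k:ℤ)) * p^s)) *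
     ((1 - p^(k+1)) * qp (p^(k+2)) p s) := by
    rw [ph, qp_succ (p^(-(k:ℤ))), qp_succ' (p^(k+1)), e2]
  rw [a1, a2]
  have a3 : p^(-(k:ℤ)) = (p^k)⁻¹ := by simp
  have a4 : p^(-((k+1:ℕ):ℤ)) = (p^k*p)⁻¹ := by rw [← pow_succ, _root_.zpow_neg, zpow_natCast]
  generalize qp (p^(-(k:ℤ))) p s = U
  generalize qp (p^(k+2)) p s = V
  rw [a3, a4]
  have : p^k ≠ 0 := pow_ne_zero _ hp
  simp only [pow_add, pow_mul', pow_one]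
  generalize p^k = x at *
  field_simp
  ring
lemma ph_fwd {p : ℂ} (h : Good p) (s k : ℕ) : (1-p^(k+1)) * (ph p (s+1) (k+1) - ph p (s+1) k) =
   -(1-p^(s+1)) * (p^(k+1))⁻¹ * (1-p^(2*k+2)) * (1 - p^(k+1)*p^s) * ph p s k := by
  have e2 : p^(k+1)*p = p^(k+2) := by ring
  have := qp_succ' (p^(k+1)) p s
  rw [qp_succ, e2] at this
  rw [ph_diff h, ph]
  linear_combination (-(1-p^(s+1)) * (p^(k+1))⁻¹ * (1-p^(2*k+2)) * (qp (p^(-(k:ℤ))) p s)) * (-this)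
lemma ph_bwd {p : ℂ} (h : Good p) (s k : ℕ) : (1-p^(-((k+1:ℕ):ℤ))) * (ph p (s+1) (k+1) - ph p (s+1) k) =
   -(1-p^(s+1)) * (p^(k+1))⁻¹ * (1-p^(2*k+2)) * (1 - p^(-((k+1:ℕ):ℤ))*p^s) * ph p s (k+1) := by
  have e1 : p^(-((k+1:ℕ):ℤ)) * p = p^(-(k:ℤ)) := by
    rw [← zpow_add_one₀ h.1]; congr 1; push_cast; ring
  have := qp_succ' (p^(-((k+1:ℕ):ℤ))) p s
  rw [qp_succ, e1] at this
  rw [ph_diff h, ph]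
  linear_combination (-(1-p^(s+1)) * (p^(k+1))⁻¹ * (1-p^(2*k+2)) * (qp (p^(k+2)) p s)) * (-this)

def Aa (p : ℂ) (L N k : ℕ) : ℂ :=
  (1-p^(k+1))*(1-p^((k:ℤ)-L))*(1-p^((k:ℤ)-N))/((1+p^(k+1))*(1-p^(2*k+1)))
def Cc (p : ℂ) (L N k : ℕ) : ℂ :=
  p*(1-p^k)*(p^(-(N:ℤ)-1)-p^k)*(p^(-(L:ℤ)-1)-p^k)/((1+p^k)*(1-p^(2*k+1)))
def mu (p : ℂ) (L N x : ℕ) : ℂ := p^(-(x:ℤ)) + p^((x:ℤ)-N-L-1) - 1 - p^(-(N:ℤ)-L-1)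
def cs (p : ℂ) (L N s : ℕ) : ℂ :=
  -(p^(s+1))⁻¹ * (1-p^(s+1))^2 * (1-p^((s:ℤ)-L)) * (1-p^((s:ℤ)-N))
/-- the operator T; f (k-1) is irrelevant at k=0 -/
def TT (p : ℂ) (L N : ℕ) (f : ℕ → ℂ) (k : ℕ) : ℂ :=
  Aa p L N k * (f (k+1) - f k) + Cc p L N k * (f (k-1) - f k)

lemma T_ph {p : ℂ} (h : Good p) (L N s k : ℕ) :
    TT p L N (ph p (s+1)) k = mu p L N (s+1) * ph p (s+1) k + cs p L N s * ph p s k := by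
  have hp := h.1
  have f1 := ph_fwd h s k
  have g1 := h.plus (k+1)
  have g2 := h.pow (2*k)
  have hA : Aa p L N k * (ph p (s+1) (k+1) - ph p (s+1) k) =
     (1-p^((k:ℤ)-L))*(1-p^((k:ℤ)-N))/(1-p^(2*k+1)) *
       (-(1-p^(s+1)) * (p^(k+1))⁻¹ * (1 - p^(k+1)) * (1 - p^(k+1)*p^s) * ph p s k) := by
    have : (1-p^(2*k+2)) = (1-p^(k+1))*(1+p^(k+1)) := by ring
    rw [this] at f1
    rw [Aa]
    rw [div_mul_eq_mul_div, div_mul_eq_mul_div, div_eq_div_iff (mul_ne_zero g1 g2) g2]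
    linear_combination ((1-p^((k:ℤ)-L))*(1-p^((k:ℤ)-N))* (1-p^(2*k+1))) * f1
  have hC : Cc p L N k * (ph p (s+1) (k-1) - ph p (s+1) k) =
     p*(p^(-(N:ℤ)-1)-p^k)*(p^(-(L:ℤ)-1)-p^k)/(1-p^(2*k+1)) *
       (-(1-p^(s+1)) * (1 - p^k) * (1 - p^(-(k:ℤ))*p^s) * ph p s k) := by
    rcases k with _ | k
    · simp [Cc]
    · have f2 := ph_bwd h s k
      have g3 := h.pow k
      have : (1-p^(2*k+2)) = (1-p^(k+1))*(1+p^(k+1)) := by ring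
      rw [this] at f2
      have g4 : p^(k+1) ≠ 0 := pow_ne_zero _ hp
      have g5 : 1 - p^(-((k+1:ℕ):ℤ)) = -(p^(k+1))⁻¹ * (1 - p^(k+1)) := by
        rw [_root_.zpow_neg, zpow_natCast]; field_simp; ring
      rw [g5] at f2
      rw [Cc]
      simp only [Nat.add_sub_cancel]
      have f3 : ph p (s+1) k - ph p (s+1) (k+1) = -(1-p^(s+1)) * (1+p^(k+1)) * (1 - p^(-((k+1:ℕ):ℤ))*p^s) * ph p s (k+1) := by
        apply mul_left_cancel₀ (mul_ne_zero (inv_ne_zero g4) g3)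
        linear_combination f2
      rw [f3]
      have g1 := h.plus (k+1)
      field_simp
  rw [TT, hA, hC, ph_succ]
  generalize ph p s k = Φ
  rw [mu, cs]
  have x1 : p^(-(k:ℤ)) = (p^k)⁻¹ := by simp
  have x2 : p^(-(N:ℤ)-1) = (p^N)⁻¹ * p⁻¹ := by rw [sub_eq_add_neg, zpow_add₀ hp]; simp
  have x3 : p^(-(L:ℤ)-1) = (p^L)⁻¹ * p⁻¹ := by rw [sub_eq_add_neg, zpow_add₀ hp]; simp
  have x4 : p^((k:ℤ)-L) = p^k * (p^L)⁻¹ := by rw [sub_eq_add_neg, zpow_add₀ hp]; simp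
  have x5 : p^((k:ℤ)-N) = p^k * (p^N)⁻¹ := by rw [sub_eq_add_neg, zpow_add₀ hp]; simp
  have x6 : p^((s:ℤ)-L) = p^s * (p^L)⁻¹ := by rw [sub_eq_add_neg, zpow_add₀ hp]; simp
  have x7 : p^((s:ℤ)-N) = p^s * (p^N)⁻¹ := by rw [sub_eq_add_neg, zpow_add₀ hp]; simp
  have x8 : p^(-((s+1:ℕ):ℤ)) = (p^s*p)⁻¹ := by rw [← pow_succ, _root_.zpow_neg, zpow_natCast]
  have x9 : p^(((s+1:ℕ):ℤ)-N-L-1) = p^s * (p^N)⁻¹ * (p^L)⁻¹ := by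
    rw [show ((s+1:ℕ):ℤ)-N-L-1 = (s:ℤ)+(-(N:ℤ))+(-(L:ℤ)) by push_cast; ring,
      zpow_add₀ hp, zpow_add₀ hp]; simp
  have x10 : p^(-(N:ℤ)-L-1) = (p^N)⁻¹ * (p^L)⁻¹ * p⁻¹ := by
    rw [show -(N:ℤ)-L-1 = (-(N:ℤ))+(-(L:ℤ)) + (-1) by push_cast; ring,
      zpow_add₀ hp, zpow_add₀ hp]; simp
  rw [x1,x2,x3,x4,x5,x6,x7,x8,x9,x10]
  have y1 : p^(2*k+1) = p^k * p^k * p := by ring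
  have y2 : p^(k+1) = p^k * p := by ring
  have y3 : p^(s+1) = p^s * p := by ring
  rw [y1] at g2
  rw [y1, y2, y3]
  have z1 : p^k ≠ 0 := pow_ne_zero _ hp
  have z2 : p^s ≠ 0 := pow_ne_zero _ hp
  have z3 : p^L ≠ 0 := pow_ne_zero _ hp
  have z4 : p^N ≠ 0 := pow_ne_zero _ hp
  generalize p^k = x at *
  generalize p^s = y at *
  generalize p^L = a at *
  generalize p^N = b at *
  clear hA hC f1
  obtain ⟨D, hD⟩ : ∃ D, D = 1 - x * x * p := ⟨_, rfl⟩
  rw [← hD] at g2 ⊢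
  field_simp
  rw [hD]
  ring

def dd (p : ℂ) (L N j s : ℕ) : ℂ :=
  qp (p^(-(j:ℤ))) p s * qp (p^((j:ℤ)-N-L-1)) p s * p^s /
   (qp p p s * qp (p^(-(L:ℤ))) p s * qp (p^(-(N:ℤ))) p s * qp p p s)
def RR (p : ℂ) (L N j k : ℕ) : ℂ := ∑ s ∈ range (j+1), dd p L N j s * ph p s k
def ww (p : ℂ) (L N k : ℕ) : ℂ :=
  p^(k^2) * (1-p^(2*k+1)) / (Ff p (L-k) * Ff p (N-k) * Ff p (L+k+1) * Ff p (N+k+1))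
def Ss (p : ℂ) (L N j i : ℕ) : ℂ := ∑ k ∈ range (min L N + 1), ww p L N k * RR p L N j k * ph p i k

lemma dd_comm (p : ℂ) (L N j s : ℕ) : dd p L N j s = dd p N L j s := by
  rw [dd, dd, show (j:ℤ)-N-L-1 = (j:ℤ)-L-N-1 by ring]
  ring
lemma Ss_comm (p : ℂ) (L N j i : ℕ) : Ss p L N j i = Ss p N L j i := by
  simp only [Ss, min_comm N L]
  apply Finset.sum_congr rfl
  intro k _
  have : RR p L N j k = RR p N L j k := by
    simp only [RR, dd_comm p L N]
  rw [this, ww, ww]; ring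

lemma mu_sub {p : ℂ} (h : Good p) (L N j i : ℕ) : mu p L N j - mu p L N i =
    -(p^i)⁻¹ * (1 - p^((i:ℤ)-j)) * (1 - p^((i:ℤ)+j-N-L-1)) := by
  have hp := h.1
  have e : ∀ a b : ℤ, p^a * p^b = p^(a+b) := fun a b => (zpow_add₀ hp a b).symm
  rw [mu, mu, ← zpow_natCast p i, ← _root_.zpow_neg]
  have e1 : p^(-(i:ℤ)) * p^((i:ℤ)-j) = p^(-(j:ℤ)) := by rw [e]; congr 1; ring
  have e2 : p^(-(i:ℤ)) * p^((i:ℤ)+j-N-L-1) = p^((j:ℤ)-N-L-1) := by rw [e]; congr 1; ring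
  have e3 : p^(-(j:ℤ)) * p^((i:ℤ)+j-N-L-1) = p^((i:ℤ)-N-L-1) := by rw [e]; congr 1; ring
  linear_combination -(1:ℂ) * e1 - e2 + p^((i:ℤ)+j-N-L-1) * e1 + e3
lemma mu_ne {p : ℂ} (h : Good p) (L N j i : ℕ) (hij : i ≠ j) (h2 : i + j ≤ L + N) :
    mu p L N j - mu p L N i ≠ 0 := by
  rw [mu_sub h]
  refine mul_ne_zero (mul_ne_zero (neg_ne_zero.2 (inv_ne_zero (pow_ne_zero _ h.1))) (h.zpow _ ?_)) (h.zpow _ ?_) <;> omega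

lemma dd_succ {p : ℂ} (h : Good p) (L N j s : ℕ) (hL : j ≤ L) (hN : j ≤ N) (hs : s < j) :
    dd p L N j (s+1) * cs p L N s = (mu p L N j - mu p L N s) * dd p L N j s := by
  have hp := h.1
  rw [mu_sub h, dd, dd, cs]
  simp only [qp_succ]
  have e : ∀ a : ℤ, p^a * p^s = p^((s:ℤ)+a) := fun a => by
    rw [← zpow_natCast p s, ← zpow_add₀ hp, add_comm]
  rw [e, e, e, e, show (s:ℤ)+(-(j:ℤ)) = (s:ℤ)-j by ring, show (s:ℤ)+(-(L:ℤ)) = (s:ℤ)-L by ring,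
   show (s:ℤ)+(-(N:ℤ)) = (s:ℤ)-N by ring, show (s:ℤ)+((j:ℤ)-N-L-1) = (s:ℤ)+j-N-L-1 by ring]
  have n1 := Ff_ne h s
  rw [Ff] at n1
  have n2 := qp_down_ne h L s (by omega)
  have n3 := qp_down_ne h N s (by omega)
  have n4 := h.zpow ((s:ℤ)-L) (by omega)
  have n5 := h.zpow ((s:ℤ)-N) (by omega)
  have n6 := h.pow s
  have n7 : p^s ≠ 0 := pow_ne_zero _ hp
  have e3 : p * p^s = p^(s+1) := by ring
  rw [e3]
  have e4 : p^(s+1) ≠ 0 := pow_ne_zero _ hp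
  generalize qp p p s = u1 at *
  generalize qp (p^(-(L:ℤ))) p s = u2 at *
  generalize qp (p^(-(N:ℤ))) p s = u3 at *
  generalize qp (p^(-(j:ℤ))) p s = u4 at *
  generalize qp (p^((j:ℤ)-N-L-1)) p s = u5 at *
  generalize (1 - p^((s:ℤ)-L)) = u6 at *
  generalize (1 - p^((s:ℤ)-N)) = u7 at *
  generalize p^((s:ℤ)-j) = u8 at *
  generalize p^((s:ℤ)+j-N-L-1) = u9 at *
  generalize (1 - p^(s+1)) = u10 at *
  generalize p^(s+1) = u11 at *
  generalize p^s = u12 at *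
  field_simp

lemma TT_RR {p : ℂ} (h : Good p) (L N j k : ℕ) (hL : j ≤ L) (hN : j ≤ N) :
    TT p L N (RR p L N j) k = mu p L N j * RR p L N j k := by
  have h1 : TT p L N (RR p L N j) k = ∑ s ∈ range (j+1), dd p L N j s * TT p L N (ph p s) k := by
    simp only [TT, RR, ← Finset.sum_sub_distrib, Finset.mul_sum, ← Finset.sum_add_distrib]
    apply Finset.sum_congr rfl
    intro s _; ring
  have h0 : TT p L N (ph p 0) k = 0 := by simp [TT, ph_zero]
  have mu0 : mu p L N 0 = 0 := by
    simp only [mu]; norm_num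
  rw [h1, Finset.sum_range_succ', h0, mul_zero, add_zero]
  have h2 : ∑ s ∈ range j, dd p L N j (s+1) * TT p L N (ph p (s+1)) k =
     ∑ s ∈ range j, dd p L N j (s+1) * mu p L N (s+1) * ph p (s+1) k
     + ∑ s ∈ range j, (mu p L N j - mu p L N s) * dd p L N j s * ph p s k := by
    rw [← Finset.sum_add_distrib]
    apply Finset.sum_congr rfl
    intro s hs
    rw [← dd_succ h L N j s hL hN (by simpa using hs), T_ph h]; ring
  have h3 : ∑ s ∈ range (j+1), dd p L N j s * mu p L N s * ph p s k =
      ∑ s ∈ range j, dd p L N j (s+1) * mu p L N (s+1) * ph p (s+1) k := by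
    rw [Finset.sum_range_succ', mu0]; ring
  have h4 : ∑ s ∈ range (j+1), (mu p L N j - mu p L N s) * dd p L N j s * ph p s k =
     ∑ s ∈ range j, (mu p L N j - mu p L N s) * dd p L N j s * ph p s k := by
    rw [Finset.sum_range_succ]; ring
  rw [h2, ← h3, ← h4, ← Finset.sum_add_distrib, RR, Finset.mul_sum]
  apply Finset.sum_congr rfl
  intro s _; ring

lemma ww_step {p : ℂ} (h : Good p) (L N k : ℕ) (hL : k < L) (hN : k < N) :
    ww p L N k * Aa p L N k = ww p L N (k+1) * Cc p L N (k+1) := by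
  have hp := h.1
  obtain ⟨l, rfl⟩ : ∃ l, L = k + 1 + l := ⟨L - (k+1), by omega⟩
  obtain ⟨m, rfl⟩ : ∃ m, N = k + 1 + m := ⟨N - (k+1), by omega⟩
  have x1 : k + 1 + l - k = l + 1 := by omega
  have x2 : k + 1 + m - k = m + 1 := by omega
  have x3 : k + 1 + l - (k+1) = l := by omega
  have x4 : k + 1 + m - (k+1) = m := by omega
  rw [ww, ww, Aa, Cc, x1, x2, x3, x4]
  have y1 : k + 1 + l + (k+1) + 1 = (k+1+l+k+1) + 1 := by ring
  have y2 : k + 1 + m + (k+1) + 1 = (k+1+m+k+1) + 1 := by ring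
  rw [y1, y2, Ff_succ p l, Ff_succ p m, Ff_succ p (k+1+l+k+1), Ff_succ p (k+1+m+k+1)]
  have n1 := Ff_ne h l
  have n2 := Ff_ne h m
  have n3 := Ff_ne h (k+1+l+k+1)
  have n4 := Ff_ne h (k+1+m+k+1)
  generalize Ff p l = f1 at *
  generalize Ff p m = f2 at *
  generalize Ff p (k+1+l+k+1) = f3 at *
  generalize Ff p (k+1+m+k+1) = f4 at *
  have z1 : p^((k:ℤ)-(k+1+l:ℕ)) = (p^(l+1))⁻¹ := by
    rw [← zpow_natCast, ← _root_.zpow_neg]; congr 1; push_cast; ring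
  have z2 : p^((k:ℤ)-(k+1+m:ℕ)) = (p^(m+1))⁻¹ := by
    rw [← zpow_natCast, ← _root_.zpow_neg]; congr 1; push_cast; ring
  have z3 : p^(-((k+1+l:ℕ):ℤ)-1) = (p^(k*1+l+2))⁻¹ := by
    rw [← zpow_natCast, ← _root_.zpow_neg]; congr 1; push_cast; ring
  have z4 : p^(-((k+1+m:ℕ):ℤ)-1) = (p^(k*1+m+2))⁻¹ := by
    rw [← zpow_natCast, ← _root_.zpow_neg]; congr 1; push_cast; ring
  rw [z1, z2, z3, z4]
  have g1 := h.plus (k+1)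
  have g2 := h.pow (2*k)
  have g3 := h.pow (2*(k+1))
  have g4 := h.pow l
  have g5 := h.pow m
  have g6 := h.pow (k+1+l+k+1)
  have g7 := h.pow (k+1+m+k+1)
  have w1 : (1 - (p^(l+1))⁻¹) = -(p^(l+1))⁻¹ * (1 - p^(l+1)) := by
    have : p^(l+1) ≠ 0 := pow_ne_zero _ hp
    field_simp; ring
  have w2 : (1 - (p^(m+1))⁻¹) = -(p^(m+1))⁻¹ * (1 - p^(m+1)) := by
    have : p^(m+1) ≠ 0 := pow_ne_zero _ hp
    field_simp; ring
  have w3 : (p^(k*1+l+2))⁻¹ - p^(k+1) = (p^(k*1+l+2))⁻¹ * (1 - p^(k+1+l+k+1+1)) := by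
    have : p^(k*1+l+2) ≠ 0 := pow_ne_zero _ hp
    field_simp; ring
  have w4 : (p^(k*1+m+2))⁻¹ - p^(k+1) = (p^(k*1+m+2))⁻¹ * (1 - p^(k+1+m+k+1+1)) := by
    have : p^(k*1+m+2) ≠ 0 := pow_ne_zero _ hp
    field_simp; ring
  rw [w1, w2, w3, w4]
  have w5 : p^((k+1)^2) * p * (p^(k*1+m+2))⁻¹ * (p^(k*1+l+2))⁻¹ = p^(k^2) * (p^(l+1))⁻¹ * (p^(m+1))⁻¹ := by
    field_simp
    ring
  generalize 1 - p^(k+1+l+k+1+1) = v1 at *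
  generalize 1 - p^(k+1+m+k+1+1) = v2 at *
  generalize 1 - p^(l+1) = v3 at *
  generalize 1 - p^(m+1) = v4 at *
  generalize 1 - p^(2*k+1) = v5 at *
  generalize 1 - p^(2*(k+1)+1) = v6 at *
  generalize 1 + p^(k+1) = v7 at *
  have L1 : p ^ k ^ 2 * v5 / (f1 * v3 * (f2 * v4) * f3 * f4) *
      ((1 - p ^ (k + 1)) * (-(p ^ (l + 1))⁻¹ * v3) * (-(p ^ (m + 1))⁻¹ * v4) / (v7 * v5)) =
      (p^(k^2) * (p^(l+1))⁻¹ * (p^(m+1))⁻¹) * (1 - p^(k+1)) / (f1 * f2 * f3 * f4 * v7) := by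
    field_simp
  rw [L1, ← w5]
  field_simp
lemma self_adj (w A C : ℕ → ℂ) (M : ℕ) (h0 : C 0 = 0) (hM : A M = 0)
    (hw : ∀ k < M, w k * A k = w (k+1) * C (k+1)) (f g : ℕ → ℂ) :
    ∑ k ∈ range (M+1), w k * (A k * (f (k+1) - f k) + C k * (f (k-1) - f k)) * g k =
    ∑ k ∈ range M, w k * A k * ((f (k+1) - f k) * (g k - g (k+1))) := by
  have : ∑ k ∈ range (M+1), w k * (A k * (f (k+1) - f k) + C k * (f (k-1) - f k)) * g k =
     ∑ k ∈ range (M+1), w k * A k * (f (k+1) - f k) * g k +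
     ∑ k ∈ range (M+1), w k * C k * (f (k-1) - f k) * g k := by
    rw [← Finset.sum_add_distrib]; apply Finset.sum_congr rfl; intro k _; ring
  rw [this, Finset.sum_range_succ, hM, Finset.sum_range_succ' _ M, h0]
  simp only [mul_zero, zero_mul, add_zero]
  rw [← Finset.sum_add_distrib]
  apply Finset.sum_congr rfl
  intro k hk
  rw [← hw k (by simpa using hk)]
  simp only [Nat.add_sub_cancel]
  ring
lemma TT_adj {p : ℂ} (h : Good p) (L N : ℕ) (f g : ℕ → ℂ) :
    ∑ k ∈ range (min L N+1), ww p L N k * TT p L N f k * g k =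
    ∑ k ∈ range (min L N+1), ww p L N k * TT p L N g k * f k := by
  have hC : Cc p L N 0 = 0 := by simp [Cc]
  have hA : Aa p L N (min L N) = 0 := by
    rcases le_total L N with h1 | h1
    · rw [min_eq_left h1]; simp [Aa]
    · rw [min_eq_right h1]; simp [Aa]
  have hw : ∀ k < min L N, ww p L N k * Aa p L N k = ww p L N (k+1) * Cc p L N (k+1) := by
    intro k hk
    exact ww_step h L N k (by omega) (by omega)
  simp only [TT]
  rw [self_adj (ww p L N) (Aa p L N) (Cc p L N) _ hC hA hw,
   self_adj (ww p L N) (Aa p L N) (Cc p L N) _ hC hA hw]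
  apply Finset.sum_congr rfl
  intro k _; ring
lemma Ss_rec {p : ℂ} (h : Good p) (L N j i : ℕ) (hL : j ≤ L) (hN : j ≤ N) :
    Ss p L N j (i+1) * (mu p L N j - mu p L N (i+1)) = cs p L N i * Ss p L N j i := by
  have := TT_adj h L N (RR p L N j) (ph p (i+1))
  simp only [TT_RR h L N j _ hL hN, T_ph h] at this
  simp only [Ss, mul_sub, Finset.mul_sum, Finset.sum_mul]
  rw [sub_eq_iff_eq_add, ← Finset.sum_add_distrib]
  trans (∑ k ∈ range (min L N+1), ww p L N k * (mu p L N j * RR p L N j k) * ph p (i+1) k)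
  · apply Finset.sum_congr rfl; intro k _; ring
  rw [this]
  apply Finset.sum_congr rfl; intro k _; ring
lemma Ss_zero {p : ℂ} (h : Good p) (L N j : ℕ) (hL : j ≤ L) (hN : j ≤ N) (hj : 0 < j) :
    Ss p L N j 0 = 0 := by
  have := TT_adj h L N (RR p L N j) (ph p 0)
  have h0 : ∀ k, TT p L N (ph p 0) k = 0 := by intro k; simp [TT, ph_zero]
  simp only [TT_RR h L N j _ hL hN, h0] at this
  have mu0 : mu p L N 0 = 0 := by
    simp only [mu]; norm_num
  have h1 := mu_ne h L N j 0 (by omega) (by omega)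
  rw [mu0, sub_zero] at h1
  apply mul_left_cancel₀ h1
  rw [Ss, Finset.mul_sum, mul_zero]
  trans (∑ k ∈ range (min L N+1), ww p L N k * (mu p L N j * RR p L N j k) * ph p 0 k)
  · apply Finset.sum_congr rfl; intro k _; ring
  rw [this]; simp
lemma Ss_lt {p : ℂ} (h : Good p) (L N j i : ℕ) (hL : j ≤ L) (hN : j ≤ N) (hi : i < j) :
    Ss p L N j i = 0 := by
  induction i with
  | zero => exact Ss_zero h L N j hL hN hi
  | succ i ih =>
    have := Ss_rec h L N j i hL hN
    rw [ih (by omega), mul_zero] at this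
    exact (mul_eq_zero.1 this).resolve_right (mu_ne h L N j (i+1) (by omega) (by omega))

def ts (p : ℂ) (M N j s : ℕ) : ℂ :=
  qp (p^(-(j:ℤ))) p s * qp (p^((j:ℤ)-N-M-1)) p s * qp (p^(M+1)) p s * p^s /
   (qp p p s ^ 2 * qp (p^(-(N:ℤ))) p s)
lemma saal_tel {p : ℂ} (h : Good p) (M N j m : ℕ) (hm : m ≤ N) :
    ∑ s ∈ range (m+1), ((1-p^(j+1))*(1-p^((N:ℤ)-j)) * ts p M N (j+1) s -
       (1-p^((j:ℤ)-M))*(1-p^((N:ℤ)+M+1-j)) * ts p M N j s) =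
    (p^((j:ℤ)-M) - p^((N:ℤ)-j)) * (qp (p^(-(j:ℤ))) p m * qp (p^((j:ℤ)-N-M)) p m * qp (p^(M+1)) p (m+1) /
      (qp p p m ^ 2 * qp (p^(-(N:ℤ))) p m)) := by
  have hp := h.1
  have ea : p^((N:ℤ)-j) = p^N * (p^j)⁻¹ := by rw [sub_eq_add_neg, zpow_add₀ hp]; simp
  have eb : p^((j:ℤ)-M) = p^j * (p^M)⁻¹ := by rw [sub_eq_add_neg, zpow_add₀ hp]; simp
  have ec : p^((N:ℤ)+M+1-j) = p^N*p^M*p * (p^j)⁻¹ := by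
    rw [sub_eq_add_neg, zpow_add₀ hp, zpow_add₀ hp, zpow_add₀ hp]; simp
  have x0 : p^j ≠ 0 := pow_ne_zero _ hp
  have x1 : p^N ≠ 0 := pow_ne_zero _ hp
  have x2 : p^M ≠ 0 := pow_ne_zero _ hp
  induction m with
  | zero =>
    rw [zero_add, Finset.sum_range_one]
    simp only [ts, qp_zero, qp_succ]
    rw [ea, eb, ec]
    simp only [pow_succ, pow_zero]
    field_simp
    ring
  | succ m ih =>
    rw [Finset.sum_range_succ, ih (by omega)]
    have e1 : p^(-((j+1:ℕ):ℤ)) * p = p^(-(j:ℤ)) := by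
      rw [← zpow_add_one₀ hp]; congr 1; push_cast; ring
    have e2 : p^((j:ℤ)-N-M-1) * p = p^((j:ℤ)-N-M) := by
      rw [← zpow_add_one₀ hp]; congr 1; push_cast; ring
    have e3 : p^(((j+1:ℕ):ℤ)-N-M-1) = p^((j:ℤ)-N-M) := by
      congr 1; push_cast; ring
    have a1 : ts p M N (j+1) (m+1) = ((1 - p^(-((j+1:ℕ):ℤ))) * qp (p^(-(j:ℤ))) p m) *
      (qp (p^((j:ℤ)-N-M)) p m * (1 - p^((j:ℤ)-N-M) * p^m)) * qp (p^(M+1)) p (m+1) * p^(m+1) /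
      (qp p p (m+1) ^ 2 * qp (p^(-(N:ℤ))) p (m+1)) := by
      rw [ts, qp_succ' (p^(-((j+1:ℕ):ℤ))), e1, e3, qp_succ (p^((j:ℤ)-N-M))]
    have a2 : ts p M N j (m+1) = (qp (p^(-(j:ℤ))) p m * (1 - p^(-(j:ℤ)) * p^m)) *
      ((1 - p^((j:ℤ)-N-M-1)) * qp (p^((j:ℤ)-N-M)) p m) * qp (p^(M+1)) p (m+1) * p^(m+1) /
      (qp p p (m+1) ^ 2 * qp (p^(-(N:ℤ))) p (m+1)) := by
      rw [ts, qp_succ' (p^((j:ℤ)-N-M-1)), e2, qp_succ (p^(-(j:ℤ)))]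
    rw [a1, a2, qp_succ (p^(-(j:ℤ))), qp_succ (p^((j:ℤ)-N-M)), qp_succ p p m, qp_succ (p^(-(N:ℤ))),
      qp_succ (p^(M+1)) p (m+1)]
    have n1 := Ff_ne h m
    rw [Ff] at n1
    have n2 := qp_down_ne h N m (by omega)
    have n3 := h.pow m
    have n4 := h.zpow (-(N:ℤ) + m) (by omega)
    rw [zpow_add₀ hp, zpow_natCast] at n4
    have ed : p^((j:ℤ)-N-M) = p^j * (p^N)⁻¹ * (p^M)⁻¹ := by
      rw [sub_eq_add_neg, sub_eq_add_neg, zpow_add₀ hp, zpow_add₀ hp]; simp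
    have ee : p^((j:ℤ)-N-M-1) = p^j * (p^N)⁻¹ * (p^M)⁻¹ * p⁻¹ := by
      rw [sub_eq_add_neg, sub_eq_add_neg, sub_eq_add_neg, zpow_add₀ hp, zpow_add₀ hp, zpow_add₀ hp]; simp
    have ef : p^(-((j+1:ℕ):ℤ)) = (p^j)⁻¹ * p⁻¹ := by
      rw [_root_.zpow_neg, zpow_natCast, pow_succ]; simp [mul_comm]
    generalize qp (p^(-(j:ℤ))) p m = U1 at *
    generalize qp (p^((j:ℤ)-N-M)) p m = U2 at *
    generalize qp (p^(M+1)) p (m+1) = U3 at *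
    generalize qp p p m = U4 at *
    generalize qp (p^(-(N:ℤ))) p m = U5 at *
    have eg : p^(-(j:ℤ)) = (p^j)⁻¹ := by simp
    have eh : p^(-(N:ℤ)) = (p^N)⁻¹ := by simp
    rw [eh] at n4
    rw [ea, eb, ec, ed, ee, ef, eg, eh]
    have n3' : 1 - p * p^m ≠ 0 := by rw [mul_comm]; exact n3
    have hx : p^(m+1) = p * p^m := by ring
    have hy : p^(j+1) = p * p^j := by ring
    have hz : p^(M+1) = p * p^M := by ring
    rw [hx, hy, hz]
    clear ih a1 a2 n3 hx hy hz ea eb ec ed ee ef eg eh e1 e2 e3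
    have hxm : p^m ≠ 0 := pow_ne_zero _ hp
    generalize p^m = y at *
    generalize p^j = x at *
    generalize p^N = b at *
    generalize p^M = a at *
    have n5 : b - y ≠ 0 := by
      intro h0
      apply n4
      have : b = y := by linear_combination h0
      rw [this]; field_simp; ring
    have n6 : 1 - b⁻¹ * y = b⁻¹ * (b - y) := by field_simp
    rw [n6]
    obtain ⟨D, hD⟩ : ∃ D, D = b - y := ⟨_, rfl⟩
    obtain ⟨E, hE⟩ : ∃ E, E = 1 - p * y := ⟨_, rfl⟩
    rw [← hD] at n5 ⊢
    rw [← hE] at n3' ⊢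
    field_simp
    rw [hD, hE]
    ring
lemma RR_ts {p : ℂ} (h : Good p) (M N j : ℕ) (hj : j ≤ M) :
    RR p M N j M = ∑ s ∈ range (j+1), ts p M N j s := by
  rw [RR]
  apply Finset.sum_congr rfl
  intro s hs
  rw [Finset.mem_range] at hs
  have n2 := qp_down_ne h M s (by omega)
  rw [dd, ph, ts]
  generalize qp (p^(-(M:ℤ))) p s = U at *
  field_simp
lemma RR_val {p : ℂ} (h : Good p) (M N j : ℕ) (hM : M ≤ N) (hj : j ≤ M) :
    RR p M N j M = qp (p^(-(M:ℤ))) p j * Ff p (N+M+1) * Ff p (N-j) /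
      (Ff p (N+M+1-j) * Ff p j * Ff p N) := by
  induction j with
  | zero =>
    have n1 := Ff_ne h (N+M+1)
    have n2 := Ff_ne h N
    simp [RR, dd, ph_zero, qp_zero, Ff_zero]
    field_simp
  | succ j ih =>
    have ih := ih (by omega)
    rw [RR_ts h _ _ _ (by omega)] at ih ⊢
    have ht := saal_tel h M N j (j+1) (by omega)
    rw [qp_down_zero h j (j+1) (by omega)] at ht
    rw [Finset.sum_sub_distrib, ← Finset.mul_sum, ← Finset.mul_sum,
      Finset.sum_range_succ (fun s => ts p M N j s)] at ht
    have t0 : ts p M N j (j+1) = 0 := by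
      rw [ts, qp_down_zero h j (j+1) (by omega)]; simp
    rw [t0, ih] at ht
    obtain ⟨m, rfl⟩ : ∃ m, N = j + 1 + m := ⟨N - (j+1), by omega⟩
    have y1 : j + 1 + m + M + 1 - j = m + M + 1 + 1 := by omega
    have y2 : j + 1 + m + M + 1 - (j+1) = m + M + 1 := by omega
    have y3 : j + 1 + m - j = m + 1 := by omega
    have y4 : j + 1 + m - (j+1) = m := by omega
    rw [y1, y3] at ht
    rw [y2, y4]
    have z1 : p^(((j+1+m:ℕ):ℤ)-j) = p^(m+1) := by
      rw [← zpow_natCast]; congr 1; push_cast; ring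
    have z2 : p^(((j+1+m:ℕ):ℤ)+M+1-j) = p^(m+M+1+1) := by
      rw [← zpow_natCast]; congr 1; push_cast; ring
    have z3 : p^((j:ℤ)-M) = p^(-(M:ℤ)) * p^j := by
      rw [← zpow_natCast, ← zpow_add₀ h.1]; congr 1; ring
    rw [z1, z2, z3, Ff_succ p m, Ff_succ p (m+M+1)] at ht
    rw [qp_succ, Ff_succ p j]
    have n1 := h.pow j
    have n2 := h.pow m
    have n3 := h.pow (m+M+1)
    have n4 := Ff_ne h m
    have n5 := Ff_ne h (m+M+1)
    have n6 := Ff_ne h j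
    have n7 := Ff_ne h (j+1+m)
    apply mul_left_cancel₀ (mul_ne_zero n1 n2)
    rw [add_zero] at ht
    have ht2 := sub_eq_zero.1 (ht.trans (by simp))
    rw [ht2]
    generalize 1 - p^(j+1) = v1 at *
    generalize 1 - p^(m+1) = v2 at *
    generalize 1 - p^(m+M+1+1) = v3 at *
    field_simp
lemma ph_val {q p : ℂ} (hpq : p = q^2) (h : Good p) (i k : ℕ) (hi : i ≤ k) :
    ph p i k = (-1)^i * q^(-(2*(k:ℤ)*i) + i*(i-1)) * Ff p (k+i) / Ff p (k-i) := by
  rw [ph, qp_down hpq h k i hi, qp_up' h]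
  have := Ff_ne h k
  field_simp

lemma Ss_top {q p : ℂ} (hpq : p = q^2) (h : Good p) (M N j : ℕ) (hM : M ≤ N) (hj : j ≤ M) :
    Ss p M N j M = (-1)^(M+j) * q^((M:ℤ)*(M-1) -2*(M:ℤ)*j + j*(j-1)) * Ff p M * Ff p (N-j) /
      (Ff p (N-M) * Ff p (M-j) * Ff p (N+M+1-j) * Ff p j * Ff p N) := by
  have hq : q ≠ 0 := by rintro rfl; apply h.1; simp [hpq]
  rw [Ss, min_eq_left hM, Finset.sum_eq_single M]
  · rw [RR_val h M N j hM hj, ph_val hpq h M M le_rfl, ww, qp_down hpq h M j hj]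
    have e1 : M - M = 0 := by omega
    rw [e1, Ff_zero, show M+M = 2*M by ring, Ff_succ]
    have g2 := h.pow (2*M)
    have e2 : p^(M^2) = q^(2*(M:ℤ)*M) := by
      rw [hpq, ← pow_mul, ← zpow_natCast]; congr 1; push_cast; ring
    have e3 : q^((M:ℤ)*(M-1) -2*(M:ℤ)*j + j*(j-1)) =
      q^(2*(M:ℤ)*M) * q^(-(2*(M:ℤ)*j) + j*(j-1)) * q^(-(2*(M:ℤ)*M) + M*(M-1)) := by
      rw [← zpow_add₀ hq, ← zpow_add₀ hq]; congr 1; ring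
    rw [e2, e3, pow_add (-1:ℂ)]
    have n1 := Ff_ne h (2*M)
    have n2 := Ff_ne h (N+M+1)
    have n3 := Ff_ne h (N+M+1-j)
    have n4 := Ff_ne h M
    have n5 := Ff_ne h (M-j)
    have n6 := Ff_ne h (N-M)
    have n7 := Ff_ne h j
    have n8 := Ff_ne h N
    generalize q^(2*(M:ℤ)*M) = Q1
    generalize q^(-(2*(M:ℤ)*j) + j*(j-1)) = Q2
    generalize q^(-(2*(M:ℤ)*M) + M*(M-1)) = Q3
    generalize 1 - p^(2*M+1) = v at *
    field_simp
  · intro k hk hne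
    rw [Finset.mem_range] at hk
    rw [ph_gt h M k (by omega), mul_zero]
  · intro h1; exact absurd (Finset.mem_range.2 (by omega)) h1

lemma Ss_step {p : ℂ} (h : Good p) (j d l m : ℕ) :
    Ss p (j+d+1+l) (j+d+1+m) j (j+d+1) * ((1-p^(d+1))*(1-p^(d+l+m+1+1))) =
    -p^d * (1-p^(j+d+1))^2*(1-p^(l+1))*(1-p^(m+1)) * Ss p (j+d+1+l) (j+d+1+m) j (j+d) := by
  have hp := h.1
  have := Ss_rec h (j+d+1+l) (j+d+1+m) j (j+d) (by omega) (by omega)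
  rw [mu_sub h, cs] at this
  generalize Ss p (j+d+1+l) (j+d+1+m) j (j+d+1) = s1 at *
  generalize Ss p (j+d+1+l) (j+d+1+m) j (j+d) = s0 at *
  have e1 : p^(((j+d+1:ℕ):ℤ)-j) = p^(d+1) := by rw [← zpow_natCast]; congr 1; push_cast; ring
  have e2 : p^(((j+d+1:ℕ):ℤ)+j-(j+d+1+m:ℕ)-(j+d+1+l:ℕ)-1) = (p^(d+l+m+1+1))⁻¹ := by
    rw [← zpow_natCast, ← _root_.zpow_neg]; congr 1; push_cast; ring
  have e3 : p^(((j+d:ℕ):ℤ)-(j+d+1+l:ℕ)) = (p^(l+1))⁻¹ := by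
    rw [← zpow_natCast, ← _root_.zpow_neg]; congr 1; push_cast; ring
  have e4 : p^(((j+d:ℕ):ℤ)-(j+d+1+m:ℕ)) = (p^(m+1))⁻¹ := by
    rw [← zpow_natCast, ← _root_.zpow_neg]; congr 1; push_cast; ring
  rw [e1, e2, e3, e4] at this
  have n0 : ∀ k, p^k ≠ 0 := fun k => pow_ne_zero _ hp
  have w1 : ∀ k, 1 - (p^k)⁻¹ = -(p^k)⁻¹ * (1 - p^k) := by
    intro k; have := n0 k; field_simp; ring
  rw [w1, w1 (l+1), w1 (m+1)] at this
  have e5 : p^(d+l+m+1+1) = p^d * p^(l+1) * p^(m+1) := by ring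
  have e6 : (p^(d+l+m+1+1))⁻¹ * p^(d+l+m+1+1) = 1 := inv_mul_cancel₀ (n0 _)
  have e7 : (p^(l+1))⁻¹ * p^(l+1) = 1 := inv_mul_cancel₀ (n0 _)
  have e8 : (p^(m+1))⁻¹ * p^(m+1) = 1 := inv_mul_cancel₀ (n0 _)
  have a1 := n0 (j+d+1)
  have a2 := n0 (l+1)
  have a3 := n0 (m+1)
  have a4 := n0 d
  have a5 := n0 (d+l+m+1+1)
  generalize hv : 1 - p^(d+l+m+1+1) = v at *
  rw [e5] at this
  generalize 1 - p^(j+d+1) = v1 at *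
  generalize 1 - p^(l+1) = v2 at *
  generalize 1 - p^(m+1) = v3 at *
  generalize 1 - p^(d+1) = v4 at *
  generalize p^(j+d+1) = u1 at *
  generalize p^(l+1) = u2 at *
  generalize p^(m+1) = u3 at *
  generalize p^d = u4 at *
  clear e6 e7 e8 hv e5 w1
  field_simp at this
  linear_combination this
lemma Ss_h {q p : ℂ} (hpq : p = q^2) (h : Good p) (j d l m : ℕ) :
    Ss p (j+d+l) (j+d+m) j (j+d) = Ss p (j+d+l) (j+d+m) j j *
     ((-1)^d * q^((d:ℤ)*(d-1)) * (Ff p (j+d) / Ff p j)^2 * Ff p (d+l) * Ff p (d+m) * Ff p (d+l+m) /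
      (Ff p l * Ff p m * Ff p d * Ff p (2*d+l+m))) := by
  have hq : q ≠ 0 := by rintro rfl; apply h.1; simp [hpq]
  induction d generalizing l m with
  | zero =>
    have n1 := Ff_ne h j
    have n2 := Ff_ne h l
    have n3 := Ff_ne h m
    have n4 := Ff_ne h (l+m)
    simp [Ff_zero]
    field_simp
  | succ d ih =>
    have i1 := ih (l+1) (m+1)
    rw [show j+d+(l+1) = j+d+1+l by ring, show j+d+(m+1) = j+d+1+m by ring] at i1
    have i2 := Ss_step h j d l m
    rw [i1] at i2
    rw [show j+(d+1) = j+d+1 by ring]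
    have n9 := h.pow d
    have n10 := h.pow (d+l+m+1)
    apply mul_right_cancel₀ (mul_ne_zero n9 n10)
    rw [i2]
    rw [Ff_succ p l, Ff_succ p m, Ff_succ p d, show d+(l+1)+(m+1) = d+l+m+1+1 by ring,
      Ff_succ p (d+l+m+1), show 2*d+(l+1)+(m+1) = 2*(d+1)+l+m by ring, Ff_succ p (j+d),
      show d+(l+1) = d+1+l by ring, show d+(m+1) = d+1+m by ring, show d+1+l+m = d+l+m+1 by ring]
    have e : q^(((d+1:ℕ):ℤ)*((d+1:ℕ)-1)) = q^((d:ℤ)*(d-1)) * p^d := by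
      rw [hpq, ← pow_mul, ← zpow_natCast, ← zpow_add₀ hq]; congr 1; push_cast; ring
    rw [e]
    have n1 := Ff_ne h j
    have n2 := Ff_ne h l
    have n3 := Ff_ne h m
    have n4 := Ff_ne h d
    have n5 := Ff_ne h (2*(d+1)+l+m)
    have n6 := h.pow l
    have n7 := h.pow m
    generalize 1 - p^(l+1) = v1 at *
    generalize 1 - p^(m+1) = v2 at *
    generalize 1 - p^(d+1) = v3 at *
    generalize 1 - p^(d+l+m+1+1) = v4 at *
    generalize q^((d:ℤ)*(d-1)) = Q
    rw [pow_succ (-1:ℂ)]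
    clear ih i1 i2 e
    generalize Ff p j = F1 at *
    generalize Ff p l = F2 at *
    generalize Ff p m = F3 at *
    generalize Ff p d = F4 at *
    generalize Ff p (2*(d+1)+l+m) = F5 at *
    generalize Ff p (j+d) = F6 at *
    generalize Ff p (d+1+l) = F7 at *
    generalize Ff p (d+1+m) = F8 at *
    generalize Ff p (d+l+m+1) = F9 at *
    generalize 1 - p^(j+d+1) = v5 at *
    generalize Ss p (j+d+1+l) (j+d+1+m) j j = SS at *
    generalize p^d = pd at *
    generalize (-1:ℂ)^d = sg at *
    clear hpq h hq
    field_simp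
lemma Ss_val_aux {q p : ℂ} (hpq : p = q^2) (h : Good p) (j d m : ℕ) :
    Ss p (j+d) (j+d+m) j j = (p^j)⁻¹ * Ff p j * Ff p (2*d+m) /
      (Ff p (d+m) * Ff p d * Ff p (j+2*d+m+1) * Ff p (j+d) * Ff p (j+d+m)) := by
  have hq : q ≠ 0 := by rintro rfl; apply h.1; simp [hpq]
  have a1 := Ss_h hpq h j d 0 m
  have a2 := Ss_top hpq h (j+d) (j+d+m) j (by omega) (by omega)
  rw [show j+d+m-j = d+m by omega, show j+d+m-(j+d) = m by omega, show j+d-j = d by omega,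
    show j+d+m+(j+d)+1-j = j+2*d+m+1 by omega] at a2
  simp only [add_zero, Ff_zero] at a1
  rw [a1] at a2
  have e : q^(((j+d:ℕ):ℤ)*((j+d:ℕ)-1) -2*((j+d:ℕ):ℤ)*j + j*(j-1)) = q^((d:ℤ)*(d-1)) * (p^j)⁻¹ := by
    rw [hpq, ← pow_mul, ← zpow_natCast, ← _root_.zpow_neg, ← zpow_add₀ hq]; congr 1; push_cast; ring
  rw [e, show j+d+j = 2*j+d by ring, pow_add, pow_mul] at a2
  have n1 := Ff_ne h j
  have n2 := Ff_ne h m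
  have n3 := Ff_ne h d
  have n4 := Ff_ne h (j+d)
  have n5 := Ff_ne h (d+m)
  have n6 := Ff_ne h (2*d+m)
  have n7 := Ff_ne h (j+d+m)
  have n8 := Ff_ne h (j+2*d+m+1)
  have n9 : q^((d:ℤ)*(d-1)) ≠ 0 := zpow_ne_zero _ hq
  have n10 : p^j ≠ 0 := pow_ne_zero _ h.1
  have n11 : ((-1:ℂ)^d) ≠ 0 := pow_ne_zero _ (by norm_num)
  generalize q^((d:ℤ)*(d-1)) = Q at *
  generalize p^j = P at *
  generalize (-1:ℂ)^d = sg at *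
  norm_num at a2
  field_simp at a2 ⊢
  linear_combination a2
lemma Ss_val {q p : ℂ} (hpq : p = q^2) (h : Good p) (L N j : ℕ) (hL : j ≤ L) (hN : j ≤ N) :
    Ss p L N j j = (p^j)⁻¹ * Ff p j * Ff p (L-j+(N-j)) /
      (Ff p (N-j) * Ff p (L-j) * Ff p (L+(N-j)+1) * Ff p L * Ff p N) := by
  rcases le_total L N with h1 | h1
  · obtain ⟨d, rfl⟩ := Nat.exists_eq_add_of_le hL
    obtain ⟨m, rfl⟩ := Nat.exists_eq_add_of_le h1
    rw [Ss_val_aux hpq h, show j+d-j+(j+d+m-j) = 2*d+m by omega, show j+d+m-j = d+m by omega,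
      show j+d-j = d by omega, show j+d+(d+m)+1 = j+2*d+m+1 by ring]
  · obtain ⟨d, rfl⟩ := Nat.exists_eq_add_of_le hN
    obtain ⟨m, rfl⟩ := Nat.exists_eq_add_of_le h1
    rw [Ss_comm, Ss_val_aux hpq h, show j+d+m-j+(j+d-j) = 2*d+m by omega, show j+d+m-j = d+m by omega,
      show j+d-j = d by omega, show j+d+m+d+1 = j+2*d+m+1 by ring]
    ring

def ca (p β : ℂ) (r : ℕ) : ℂ := qp β p r / qp p p r
lemma ca_succ {p : ℂ} (h : Good p) (β : ℂ) (r : ℕ) :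
    ca p β (r+1) * (1 - p^(r+1)) = ca p β r * (1 - β * p^r) := by
  have n1 := Ff_ne h r
  have n2 := h.pow r
  have e : qp p p (r+1) = Ff p r * (1 - p^(r+1)) := by rw [← Ff_succ]; rfl
  rw [ca, ca, e, qp_succ]
  change _ = _ / Ff p r * _
  field_simp
/-- Weighted ultraspherical Laurent sum. -/
def SW (p β : ℂ) (m : ℕ) (z : ℂ) (φ : ℕ → ℕ → ℂ) : ℂ :=
  ∑ x ∈ antidiagonal m, φ x.1 x.2 * (ca p β x.1 * ca p β x.2 * z^((x.2:ℤ) - x.1))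
lemma SW_congr (p β : ℂ) (m : ℕ) (z : ℂ) (φ ψ : ℕ → ℕ → ℂ) (h : ∀ r s, r + s = m → φ r s = ψ r s) :
    SW p β m z φ = SW p β m z ψ := by
  apply Finset.sum_congr rfl
  intro x hx
  rw [h x.1 x.2 (mem_antidiagonal.1 hx)]
lemma SW_add (p β : ℂ) (m : ℕ) (z : ℂ) (φ ψ : ℕ → ℕ → ℂ) :
    SW p β m z (fun r s => φ r s + ψ r s) = SW p β m z φ + SW p β m z ψ := by
  simp only [SW, ← Finset.sum_add_distrib, add_mul]
lemma SW_smul (p β : ℂ) (m : ℕ) (z c : ℂ) (φ : ℕ → ℕ → ℂ) :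
    SW p β m z (fun r s => c * φ r s) = c * SW p β m z φ := by
  simp only [SW, Finset.mul_sum, mul_assoc]
lemma SW_sh1 {p : ℂ} (h : Good p) (β : ℂ) (m : ℕ) (z : ℂ) (hz : z ≠ 0) (φ : ℕ → ℕ → ℂ) :
    SW p β (m+1) z (fun r s => φ r s * (1-p^s)) =
    z * SW p β m z (fun r s => φ r (s+1) * (1-β*p^s)) := by
  rw [SW, Finset.Nat.sum_antidiagonal_succ', SW, Finset.mul_sum]
  simp only [pow_zero, sub_self, mul_zero, zero_mul, zero_add]
  apply Finset.sum_congr rfl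
  rintro ⟨r, s⟩ -
  simp only
  have e : z^(((s+1:ℕ):ℤ) - r) = z^((s:ℤ)-r) * z := by
    rw [← zpow_add_one₀ hz]; congr 1; push_cast; ring
  rw [e]
  linear_combination φ r (s+1) * ca p β r * z^((s:ℤ)-r) * z * ca_succ h β s
lemma SW_sh2 {p : ℂ} (h : Good p) (β : ℂ) (m : ℕ) (z : ℂ) (hz : z ≠ 0) (φ : ℕ → ℕ → ℂ) :
    z * SW p β (m+1) z (fun r s => φ r s * (1-p^r)) =
    SW p β m z (fun r s => φ (r+1) s * (1-β*p^r)) := by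
  rw [SW, Finset.Nat.sum_antidiagonal_succ, SW]
  simp only [pow_zero, sub_self, mul_zero, zero_mul, zero_add]
  rw [Finset.mul_sum]
  apply Finset.sum_congr rfl
  rintro ⟨r, s⟩ -
  simp only
  have e : z * z^((s:ℤ) - (r+1:ℕ)) = z^((s:ℤ)-r) := by
    rw [mul_comm, ← zpow_add_one₀ hz]; congr 1; push_cast; ring
  rw [← e]
  linear_combination φ (r+1) s * ca p β s * z^((s:ℤ)-(r+1:ℕ)) * z * ca_succ h β r

/-- value at the symmetric point -/
def ev (f : ℂ[X]) (z : ℂ) : ℂ := f.eval ((z + z⁻¹)/2)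
lemma ev_inv (f : ℂ[X]) (z : ℂ) : ev f z⁻¹ = ev f z := by
  simp [ev, add_comm]
lemma ev_SW {C : ℂ → ℂ → ℕ → ℂ[X]} (hC : IsUltra C) (p β : ℂ) (m : ℕ) (z : ℂ) (hz : z ≠ 0) :
    ev (C p β m) z = SW p β m z (fun _ _ => 1) := by
  rw [ev, (hC p β m).2 z hz, SW, Finset.Nat.sum_antidiagonal_eq_sum_range_succ_mk]
  apply Finset.sum_congr rfl
  intro r hr
  have : r ≤ m := by simpa [Nat.lt_succ_iff] using hr
  simp only [ca]
  rw [show ((m:ℤ) - 2 * r) = ((m - r : ℕ):ℤ) - r by push_cast [this]; ring]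
  rw [mul_div_mul_comm]; ring
lemma ev_qz {C : ℂ → ℂ → ℕ → ℂ[X]} (hC : IsUltra C) {p q : ℂ} (hpq : p = q^2) (hq : q ≠ 0) (β : ℂ) (m : ℕ)
    (z : ℂ) (hz : z ≠ 0) :
    q^m * ev (C p β m) (q*z) = SW p β m z (fun _ s => p^s) := by
  rw [ev_SW hC p β m _ (mul_ne_zero hq hz), SW, SW, Finset.mul_sum]
  apply Finset.sum_congr rfl
  rintro ⟨r, s⟩ hx
  have hx : r + s = m := mem_antidiagonal.1 hx
  simp only
  have e : q^m * q^((s:ℤ)-r) = p^s := by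
    rw [hpq, ← zpow_natCast, ← zpow_add₀ hq, ← pow_mul, ← zpow_natCast]; congr 1; subst hx; push_cast; ring
  rw [mul_zpow, ← e]; ring
lemma ev_qiz {C : ℂ → ℂ → ℕ → ℂ[X]} (hC : IsUltra C) {p q : ℂ} (hpq : p = q^2) (hq : q ≠ 0) (β : ℂ) (m : ℕ)
    (z : ℂ) (hz : z ≠ 0) :
    q^m * ev (C p β m) (q⁻¹*z) = SW p β m z (fun r _ => p^r) := by
  rw [ev_SW hC p β m _ (mul_ne_zero (inv_ne_zero hq) hz), SW, SW, Finset.mul_sum]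
  apply Finset.sum_congr rfl
  rintro ⟨r, s⟩ hx
  have hx : r + s = m := mem_antidiagonal.1 hx
  simp only
  have e : q^m * q⁻¹^((s:ℤ)-r) = p^r := by
    rw [hpq, ← zpow_natCast, _root_.inv_zpow, ← _root_.zpow_neg, ← zpow_add₀ hq, ← pow_mul, ← zpow_natCast]; congr 1; subst hx; push_cast; ring
  rw [mul_zpow, ← e]; ring

lemma I1 {C : ℂ → ℂ → ℕ → ℂ[X]} (hC : IsUltra C) {p q : ℂ} (hpq : p = q^2) (h : Good p) (hq : q ≠ 0)
    (β : ℂ) (hβ : β ≠ 0) (m : ℕ) (z : ℂ) (hz : z ≠ 0) :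
    q^(m+1) * (1 - (β * p^m)⁻¹ * z^2) * ev (C p β (m+1)) (q*z)
      - z * β * (1 - (β^2*p^m)⁻¹) * (q^m * ev (C p β m) (q*z)) =
      (1 - p * β⁻¹ * z^2) * ev (C p β (m+1)) z := by
  have hp := h.1
  rw [ev_SW hC p β (m+1) z hz, ev_qz hC hpq hq β m z hz]
  have e1 := ev_qz hC hpq hq β (m+1) z hz
  have a1 := SW_sh1 h β m z hz (fun _ _ => 1)
  have a2 := SW_sh2 h β m z hz (fun r _ => (p^r)⁻¹)
  have b1 : SW p β (m+1) z (fun r s => 1 * (1-p^s)) = SW p β (m+1) z (fun _ _ => 1) -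
      SW p β (m+1) z (fun _ s => p^s) := by
    have := SW_add p β (m+1) z (fun r s => 1 * (1-p^s)) (fun _ s => p^s)
    rw [← sub_eq_iff_eq_add.2 this]
    congr 1; apply SW_congr; intros; ring
  have b2 : SW p β (m+1) z (fun r s => (p^r)⁻¹ * (1-p^r)) = (p^(m+1))⁻¹ * SW p β (m+1) z (fun _ s => p^s) -
      SW p β (m+1) z (fun _ _ => 1) := by
    rw [← SW_smul, eq_sub_iff_add_eq, ← SW_add]
    apply SW_congr; intro r s hrs
    rw [← hrs, pow_add]
    have := pow_ne_zero r hp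
    have := pow_ne_zero s hp
    field_simp
    ring
  have b3 : SW p β m z (fun r s => 1 * (1-β*p^s)) = SW p β m z (fun _ _ => 1) -
      β * SW p β m z (fun _ s => p^s) := by
    rw [← SW_smul, eq_sub_iff_add_eq, ← SW_add]
    apply SW_congr; intros; ring
  have b4 : SW p β m z (fun r s => (p^(r+1))⁻¹ * (1-β*p^r)) = (p^(m+1))⁻¹ * SW p β m z (fun _ s => p^s) -
      β * p⁻¹ * SW p β m z (fun _ _ => 1) := by
    rw [← SW_smul, ← SW_smul, eq_sub_iff_add_eq, ← SW_add]
    apply SW_congr; intro r s hrs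
    rw [← hrs, pow_succ, pow_succ, pow_add]
    have := pow_ne_zero r hp
    have := pow_ne_zero s hp
    field_simp
    ring
  rw [b1, b3] at a1
  rw [b2, b4] at a2
  have e3 : q^(m+1) * (1 - (β * p^m)⁻¹ * z^2) * ev (C p β (m+1)) (q*z) =
    (1 - (β * p^m)⁻¹ * z^2) * SW p β (m+1) z (fun _ s => p^s) := by rw [← e1]; ring
  rw [e3]
  clear e3 e1 b1 b2 b3 b4
  generalize SW p β (m+1) z (fun _ s => p^s) = x1 at *
  generalize SW p β (m+1) z (fun _ _ => 1) = x2 at *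
  generalize SW p β m z (fun _ s => p^s) = x3 at *
  generalize SW p β m z (fun _ _ => 1) = x4 at *
  have := pow_ne_zero m hp
  rw [pow_succ] at a2
  generalize p^m = y at *
  field_simp at a2 ⊢
  linear_combination -β*y*a1 - z*a2

lemma I2 {C : ℂ → ℂ → ℕ → ℂ[X]} (hC : IsUltra C) {p q : ℂ} (hpq : p = q^2) (h : Good p) (hq : q ≠ 0)
    (β : ℂ) (m : ℕ) (z : ℂ) (hz : z ≠ 0) :
    (1 - β * z^2) * ev (C p β m) (q*z) + (β - z^2) * ev (C p β m) (q⁻¹*z) =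
      (1 - z^2) * ((q^m)⁻¹ + β*q^m) * ev (C p β m) z := by
  have hp := h.1
  have hqm := pow_ne_zero m hq
  apply mul_left_cancel₀ hqm
  have e1 := ev_qz hC hpq hq β m z hz
  have e2 := ev_qiz hC hpq hq β m z hz
  have e3 := ev_SW hC p β m z hz
  have key : SW p β m z (fun r s => (1-β*p^r)*(1-p^s)) = z^2 * SW p β m z (fun r s => (1-β*p^s)*(1-p^r)) := by
    cases m with
    | zero => simp [SW]
    | succ m =>
      rw [SW_sh1 h β m z hz (fun r s => (1-β*p^r)), sq, mul_assoc, SW_sh2 h β m z hz (fun r s => (1-β*p^s))]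
      congr 1; apply SW_congr; intros; ring
  have b1 : SW p β m z (fun r s => (1-β*p^r)*(1-p^s)) = (1 + β*p^m) * SW p β m z (fun _ _ => 1) -
     β * SW p β m z (fun r _ => p^r) - SW p β m z (fun _ s => p^s) := by
    rw [← SW_smul, ← SW_smul, eq_sub_iff_add_eq, ← SW_add, eq_sub_iff_add_eq, ← SW_add]
    apply SW_congr; intro r s hrs; rw [← hrs]; ring
  have b2 : SW p β m z (fun r s => (1-β*p^s)*(1-p^r)) = (1 + β*p^m) * SW p β m z (fun _ _ => 1) -
     β * SW p β m z (fun _ s => p^s) - SW p β m z (fun r _ => p^r) := by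
    rw [← SW_smul, ← SW_smul, eq_sub_iff_add_eq, ← SW_add, eq_sub_iff_add_eq, ← SW_add]
    apply SW_congr; intro r s hrs; rw [← hrs]; ring
  rw [b1, b2, ← e1, ← e2, ← e3] at key
  have hpm : p^m = q^m * q^m := by rw [hpq, ← pow_mul, two_mul, pow_add]
  rw [hpm] at key
  generalize ev (C p β m) (q*z) = x1 at *
  generalize ev (C p β m) (q⁻¹*z) = x2 at *
  generalize ev (C p β m) z = x3 at *
  have : q^m * ((1 - z^2) * ((q^m)⁻¹ + β*q^m) * x3) = (1-z^2)*(1+β*(q^m*q^m))*x3 := by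
    field_simp
  rw [this]
  linear_combination -key

/-- rescaled polynomial -/
def HH (f : ℂ[X]) (e : ℕ) (c w : ℂ) : ℂ :=
  ∑ m ∈ range (e+1), f.coeff m * ((c + w^2/c)/2)^m * w^(e-m)
lemma HH_cont (f : ℂ[X]) (e : ℕ) (c : ℂ) : Continuous (HH f e c) := by
  unfold HH
  fun_prop
lemma HH_zero (f : ℂ[X]) (e : ℕ) (c : ℂ) : HH f e c 0 = f.coeff e * (c/2)^e := by
  rw [HH, Finset.sum_range_succ, Finset.sum_eq_zero]
  · simp
  · intro m hm
    have : e - m ≠ 0 := by have := Finset.mem_range.1 hm; omega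
    simp [this]
lemma HH_ev (f : ℂ[X]) (e : ℕ) (hf : f.natDegree ≤ e) (c w : ℂ) (hc : c ≠ 0) (hw : w ≠ 0) :
    HH f e c w = w^e * ev f (c*w⁻¹) := by
  rw [ev, Polynomial.eval_eq_sum_range' (Nat.lt_succ_of_le hf), HH, Finset.mul_sum]
  apply Finset.sum_congr rfl
  intro m hm
  have hm : m ≤ e := by have := Finset.mem_range.1 hm; omega
  obtain ⟨d, rfl⟩ := Nat.exists_eq_add_of_le hm
  rw [show m + d - m = d by omega, pow_add]
  have : (c + w^2/c)/2 = w * ((c*w⁻¹ + (c*w⁻¹)⁻¹)/2) := by field_simp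
  rw [this, mul_pow]; ring
lemma ext_zero (f g : ℂ → ℂ) (hf : Continuous f) (hg : Continuous g) (h : ∀ w, w ≠ 0 → f w = g w) :
    f 0 = g 0 := by
  have := Continuous.ext_on (dense_compl_singleton (0:ℂ)) hf hg (fun w hw => h w hw)
  rw [this]
lemma C_lead {C : ℂ → ℂ → ℕ → ℂ[X]} (hC : IsUltra C) (p β : ℂ) (m : ℕ) :
    (C p β m).coeff m = 2^m * ca p β m := by
  have hd : (C p β m).natDegree ≤ m := Polynomial.natDegree_le_of_degree_le (hC p β m).1
  have := ext_zero (HH (C p β m) m 1) (fun w => ∑ x ∈ antidiagonal m, ca p β x.1 * ca p β x.2 * w^(2*x.1))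
    (HH_cont _ _ _) (by fun_prop) (by
      intro w hw
      rw [HH_ev _ _ hd _ _ one_ne_zero hw, one_mul, ev_SW hC _ _ _ _ (inv_ne_zero hw), SW, Finset.mul_sum]
      apply Finset.sum_congr rfl
      rintro ⟨r, s⟩ hx
      have hx : r + s = m := mem_antidiagonal.1 hx
      simp only
      have e : w^m * w⁻¹^((s:ℤ)-r) = w^(2*r) := by
        rw [_root_.inv_zpow, ← _root_.zpow_neg, ← zpow_natCast, ← zpow_natCast, ← zpow_add₀ hw]
        congr 1; subst hx; push_cast; ring
      rw [← e]; ring)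
  rw [HH_zero] at this
  rw [Finset.sum_eq_single (0, m)] at this
  · simp only [ca, qp_zero] at this
    rw [ca]
    simp at this
    rw [mul_comm (2^m)]
    field_simp at this ⊢
    linear_combination this
  · rintro ⟨r, s⟩ hx hne
    have hx : r + s = m := mem_antidiagonal.1 hx
    have : r ≠ 0 := by rintro rfl; apply hne; simp at hx; simp [hx]
    simp [this]
  · intro h; exact absurd (by simp) h
lemma C_par {C : ℂ → ℂ → ℕ → ℂ[X]} (hC : IsUltra C) (p β : ℂ) (m : ℕ) :
    (C p β m).comp (-X) = Polynomial.C ((-1)^m) * C p β m := by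
  apply Polynomial.funext
  intro x
  obtain ⟨s, hs⟩ := IsAlgClosed.exists_pow_nat_eq (x^2-1) (n := 2) (by norm_num)
  have hz : x + s ≠ 0 := by
    intro h0
    have : s = -x := by linear_combination h0
    rw [this] at hs
    have : (1:ℂ) = 0 := by linear_combination hs
    exact one_ne_zero this
  have hx : x = ((x+s) + (x+s)⁻¹)/2 := by
    field_simp
    linear_combination -hs
  have hx' : -x = (-(x+s) + (-(x+s))⁻¹)/2 := by
    rw [inv_neg]; linear_combination -hx
  have a1 := ev_SW hC p β m (x+s) hz
  have a2 := ev_SW hC p β m (-(x+s)) (neg_ne_zero.2 hz)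
  rw [ev, ← hx] at a1
  rw [ev, ← hx'] at a2
  simp only [eval_comp, eval_neg, eval_X, eval_mul, eval_C]
  rw [a1, a2, SW, SW, Finset.mul_sum]
  apply Finset.sum_congr rfl
  rintro ⟨r, t⟩ h
  have h : r + t = m := mem_antidiagonal.1 h
  have e : (-(x+s))^((t:ℤ)-r) = (-1)^m * (x+s)^((t:ℤ)-r) := by
    rw [neg_eq_neg_one_mul, mul_zpow]; congr 1
    rw [zpow_sub₀ (by norm_num), zpow_natCast, zpow_natCast, ← h, pow_add]
    rcases neg_one_pow_eq_or ℂ r with h1 | h1 <;> rw [h1] <;> ring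
  simp only [e]; ring

def cf (q : ℂ) (L n j i k : ℕ) : ℂ :=
          ((-1 : ℂ) ^ k *
            q ^ ((n : ℤ) + (2 * (k : ℤ) + 1) * ((k : ℤ) - (i : ℤ)) +
                (j : ℤ) * (2 * (k : ℤ) + 1) + 2 * (k : ℤ) * ((L : ℤ) + (n : ℤ) + 1) -
                (k : ℤ) ^ 2) *
            (qp (q ^ 2) (q ^ 2) k * qp (q ^ 2) (q ^ 2) (k + i) /
              (qp (q ^ 2) (q ^ 2) (2 * k) * qp (q ^ 2) (q ^ 2) i)) *
            (qp (q ^ (-(2 * (L : ℤ)))) (q ^ 2) k *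
                qp (q ^ (-(2 * (j : ℤ) + 2 * (n : ℤ)))) (q ^ 2) k /
              (qp (q ^ 2) (q ^ 2) k * qp (q ^ (2 * (L : ℤ) + 4)) (q ^ 2) k)) *
            (qp (q ^ 2) (q ^ 2) (n + j - k) /
              qp (q ^ (4 * (k : ℤ) + 4)) (q ^ 2) (n + j - k)) *
            qRacah (q ^ 2) 1 1 (q ^ (-(2 * (n : ℤ) + 2 * (j : ℤ) + 2)))
              (q ^ (-(2 * (L : ℤ) + 2))) k j)
def pt (q : ℂ) (L : ℕ) (C : ℂ → ℂ → ℕ → ℂ[X]) (n j i k : ℕ) : ℂ[X] :=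
  if i ≤ k then Polynomial.C (cf q L n j i k) *
        (C (q ^ 2) (q ^ (-(2 * (k : ℤ)))) (k - i) *
          C (q ^ 2) (q ^ (2 * (k : ℤ) + 2)) (n + j - k)) else 0
def pp (q : ℂ) (L : ℕ) (C : ℂ → ℂ → ℕ → ℂ[X]) (n j i : ℕ) : ℂ[X] :=
  ∑ k ∈ range (min L (n+j) + 1), pt q L C n j i k
lemma Pm_pp (q : ℂ) (L : ℕ) (C : ℂ → ℂ → ℕ → ℂ[X]) (n : ℕ) (i j : Fin (L+1)) :
    Pm q L C n i j = pp q L C n j i := by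
  rw [Pm, pp, Matrix.of_apply]
  simp only [pt]
  rw [← Finset.sum_filter]
  apply Finset.sum_congr
  · ext k; simp only [Finset.mem_Icc, Finset.mem_filter, Finset.mem_range]; omega
  · intro k _; rfl
lemma cf_key (A a F X1 X2 D E v B1 B2 B3 : ℂ) (hv : v ≠ 0) :
      A * a * (F * (X1 * X2) / (D * (E * v))) * B1 * B2 * B3 * v =
      A * (F * X1 / (D * E)) * B1 * B2 * B3 * (a * X2) := by
  have e : F * (X1 * X2) / (D * (E * v)) = (F * X1 / (D * E)) * X2 * v⁻¹ := by ring
  have e2 : v⁻¹ * v = 1 := inv_mul_cancel₀ hv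
  rw [e]
  linear_combination A * a * (F * X1 / (D * E)) * X2 * B1 * B2 * B3 * e2
lemma cf_step {q : ℂ} (h : Good (q^2)) (hq : q ≠ 0) (L n j i k : ℕ) :
    cf q L n j (i+1) k * (1 - (q^2)^(i+1)) = cf q L n j i k * ((q^(2*k+1))⁻¹ * (1 - (q^2)^(k+i+1))) := by
  have n1 := Ff_ne h i
  have n2 := h.pow i
  have e : q ^ ((n : ℤ) + (2 * (k : ℤ) + 1) * ((k : ℤ) - (i+1:ℕ)) +
                (j : ℤ) * (2 * (k : ℤ) + 1) + 2 * (k : ℤ) * ((L : ℤ) + (n : ℤ) + 1) -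
                (k : ℤ) ^ 2) = q ^ ((n : ℤ) + (2 * (k : ℤ) + 1) * ((k : ℤ) - (i : ℤ)) +
                (j : ℤ) * (2 * (k : ℤ) + 1) + 2 * (k : ℤ) * ((L : ℤ) + (n : ℤ) + 1) -
                (k : ℤ) ^ 2) * (q^(2*k+1))⁻¹ := by
    rw [← zpow_natCast, ← _root_.zpow_neg, ← zpow_add₀ hq]; congr 1; push_cast; ring
  have e1 : qp (q^2) (q^2) (k+(i+1)) = qp (q^2) (q^2) (k+i) * (1 - (q^2)^(k+i+1)) := Ff_succ _ _
  have e2 : qp (q^2) (q^2) (i+1) = qp (q^2) (q^2) i * (1 - (q^2)^(i+1)) := Ff_succ _ _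
  have n1 : qp (q^2) (q^2) i ≠ 0 := n1
  rw [cf, cf, e, e1, e2]
  rw [← mul_assoc ((-1:ℂ)^k)]
  exact cf_key _ _ _ _ _ _ _ _ _ _ _ n2
/-- The q-difference relation between consecutive entries. -/
def Dp (q : ℂ) (i N : ℕ) (f g : ℂ[X]) : Prop := ∀ z : ℂ, z ≠ 0 →
  q^(1-(i:ℤ)) * ((1-(q^2)^(i+1)*z^2) * ev f (q*z) + ((q^2)^(i+1)-z^2) * ev f (q⁻¹*z))
   - q^(1-(i:ℤ)) * (1-(q^2)^(i+1)) * z * (ev g (q*z) - ev g (q⁻¹*z)) =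
   (q^(1-(N:ℤ)) + q^((N:ℤ)+3)) * (1-z^2) * ev f z
lemma ev_add (f g : ℂ[X]) (z : ℂ) : ev (f+g) z = ev f z + ev g z := by simp [ev]
lemma ev_mul (f g : ℂ[X]) (z : ℂ) : ev (f*g) z = ev f z * ev g z := by simp [ev]
lemma ev_C (c z : ℂ) : ev (Polynomial.C c) z = c := by simp [ev]
lemma ev_zero (z : ℂ) : ev 0 z = 0 := by simp [ev]
lemma Dp_zero (q : ℂ) (i N : ℕ) : Dp q i N 0 0 := by intro z _; simp [ev_zero]
lemma Dp_add {q : ℂ} {i N : ℕ} {f g f' g' : ℂ[X]} (h : Dp q i N f g) (h' : Dp q i N f' g') :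
    Dp q i N (f+f') (g+g') := by
  intro z hz
  simp only [ev_add]
  linear_combination h z hz + h' z hz
lemma Dp_sum {q : ℂ} {i N : ℕ} (f g : ℕ → ℂ[X]) (s : Finset ℕ) (h : ∀ k ∈ s, Dp q i N (f k) (g k)) :
    Dp q i N (∑ k ∈ s, f k) (∑ k ∈ s, g k) := by
  induction s using Finset.induction_on with
  | empty => simpa using Dp_zero q i N
  | insert a s ha ih =>
    rw [Finset.sum_insert ha, Finset.sum_insert ha]
    exact Dp_add (h a (by simp)) (ih (fun k hk => h k (by simp [hk])))
lemma I1z {C : ℂ → ℂ → ℕ → ℂ[X]} (hC : IsUltra C) {q : ℂ} (h : Good (q^2)) (hq : q ≠ 0)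
    (i m : ℕ) (z : ℂ) (hz : z ≠ 0) :
    q^(m+1) * ((1 - (q^2)^(i+1) * z^2) * ev (C (q^2) (q^(-(2*((i+m+1:ℕ):ℤ)))) (m+1)) (q*z)
      - z * ((q^(2*(i+m+1)+1))⁻¹ * (1 - (q^2)^(i+m+1+i+1))) * ev (C (q^2) (q^(-(2*((i+m+1:ℕ):ℤ)))) m) (q*z)) =
      (1 - (q^2)^(i+m+1+1) * z^2) * ev (C (q^2) (q^(-(2*((i+m+1:ℕ):ℤ)))) (m+1)) z := by
  have hb : q^(-(2*((i+m+1:ℕ):ℤ))) ≠ 0 := zpow_ne_zero _ hq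
  have := I1 hC rfl h hq (q^(-(2*((i+m+1:ℕ):ℤ)))) hb m z hz
  have e0 : q^(-(2*((i+m+1:ℕ):ℤ))) = ((q^2)^(i+m+1))⁻¹ := by
    rw [← pow_mul, ← zpow_natCast, ← _root_.zpow_neg]; congr 1
  have e1 : (q^(-(2*((i+m+1:ℕ):ℤ))) * (q^2)^m)⁻¹ = (q^2)^(i+1) := by
    rw [e0]; field_simp; ring
  have e2 : ((q^(-(2*((i+m+1:ℕ):ℤ))))^2 * (q^2)^m)⁻¹ = (q^2)^(i+m+1+i+1) := by
    rw [e0]; field_simp; ring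
  have e3 : q^2 * (q^(-(2*((i+m+1:ℕ):ℤ))))⁻¹ = (q^2)^(i+m+1+1) := by
    rw [e0, inv_inv]; ring
  rw [e1, e2, e3] at this
  rw [← this]
  have e4 : q^(-(2*((i+m+1:ℕ):ℤ))) * q^m = q^(m+1) * (q^(2*(i+m+1)+1))⁻¹ := by
    rw [e0]; field_simp; ring
  linear_combination (1 - (q^2)^(i+m+1+i+1)) * z * ev (C (q^2) (q^(-(2*((i+m+1:ℕ):ℤ)))) m) (q*z) * e4
lemma pt_D {C : ℂ → ℂ → ℕ → ℂ[X]} (hC : IsUltra C) {q : ℂ} (h : Good (q^2)) (hq : q ≠ 0)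
    (L n j i k : ℕ) (hk : k ≤ n+j) : Dp q i (n+j) (pt q L C n j i k) (pt q L C n j (i+1) k) := by
  rcases lt_or_ge k i with h1 | h1
  · rw [pt, pt, if_neg (by omega), if_neg (by omega)]; exact Dp_zero _ _ _
  intro z hz
  have hqz : q⁻¹ * z = (q * z⁻¹)⁻¹ := by field_simp
  have i2 := I2 hC rfl h hq (q^(2*(k:ℤ)+2)) (n+j-k) z hz
  have eb : q^(2*(k:ℤ)+2) = (q^2)^(k+1) := by
    rw [← pow_mul, ← zpow_natCast]; congr 1
  set B := C (q^2) (q^(2*(k:ℤ)+2)) (n+j-k) with hB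
  rw [eb] at i2
  have ef : q^(1-(k:ℤ)) * ((q^(n+j-k))⁻¹ + (q^2)^(k+1)*q^(n+j-k)) = q^(1-((n+j:ℕ):ℤ)) + q^(((n+j:ℕ):ℤ)+3) := by
    obtain ⟨d, hd⟩ := Nat.exists_eq_add_of_le hk
    rw [hd, show k+d-k = d by omega, mul_add]
    congr 1
    · rw [← zpow_natCast, ← _root_.zpow_neg, ← zpow_add₀ hq]; congr 1; push_cast; ring
    · rw [← pow_mul, ← pow_add, ← zpow_natCast, ← zpow_add₀ hq]; congr 1; push_cast; ring
  rcases eq_or_lt_of_le h1 with h1 | h1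
  · subst h1
    rw [pt, pt, if_pos le_rfl, if_neg (by omega), ← hB]
    have e0 : ∀ w : ℂ, w ≠ 0 → ev (C (q^2) (q^(-(2*(i:ℤ)))) (i-i)) w = 1 := by
      intro w hw; rw [ev_SW hC _ _ _ _ hw]; simp [SW, ca, qp_zero]
    simp only [ev_mul, ev_C, ev_zero, sub_self, mul_zero, sub_zero]
    rw [e0 _ hz, e0 _ (mul_ne_zero hq hz), e0 _ (mul_ne_zero (inv_ne_zero hq) hz), ← ef]
    linear_combination q^(1-(i:ℤ)) * cf q L n j i i * i2
  · obtain ⟨m, rfl⟩ := Nat.exists_eq_add_of_le h1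
    rw [show i.succ + m = i+m+1 by omega] at *
    have a1 := I1z hC h hq i m z hz
    have a2 := I1z hC h hq i m z⁻¹ (inv_ne_zero hz)
    have cs := cf_step h hq L n j i (i+m+1)
    rw [pt, pt, if_pos (by omega), if_pos (by omega), ← hB]
    rw [show i+m+1-i = m+1 by omega, show i+m+1-(i+1) = m by omega]
    set A := C (q^2) (q^(-(2*((i+m+1:ℕ):ℤ)))) (m+1)
    set A' := C (q^2) (q^(-(2*((i+m+1:ℕ):ℤ)))) m
    rw [ev_inv A z, ← ev_inv A (q*z⁻¹), ← ev_inv A' (q*z⁻¹), ← hqz] at a2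
    simp only [ev_mul, ev_C]
    have hg : q^(1-(i:ℤ)) = q^(1-((i+m+1:ℕ):ℤ)) * q^(m+1) := by
      rw [← zpow_natCast, ← zpow_add₀ hq]; congr 1; push_cast; ring
    rw [← ef, hg]
    generalize q^(1-((i+m+1:ℕ):ℤ)) = g at *
    generalize (q^(2*(i+m+1)+1))⁻¹ * (1 - (q^2)^(i+m+1+i+1)) = κ at *
    generalize ev A (q*z) = A1 at *
    generalize ev A (q⁻¹*z) = A2 at *
    generalize ev A z = A3 at *
    generalize ev A' (q*z) = A4 at *
    generalize ev A' (q⁻¹*z) = A5 at *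
    generalize ev B (q*z) = B1 at *
    generalize ev B (q⁻¹*z) = B2 at *
    generalize ev B z = B3 at *
    generalize cf q L n j i (i+m+1) = c0 at *
    generalize cf q L n j (i+1) (i+m+1) = c1 at *
    generalize q^(m+1) = r at *
    generalize (q^2)^(i+1) = P at *
    generalize (q^2)^(i+m+1+1) = P' at *
    have a3 : r * ((P - z^2) * A2 + z * κ * A5) = (P' - z^2) * A3 := by
      field_simp at a2
      linear_combination -a2
    linear_combination g * c0 * B1 * a1 + g * c0 * B2 * a3 + g * c0 * A3 * i2 - g * r * z * (A4*B1 - A5*B2) * cs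
lemma pp_D {C : ℂ → ℂ → ℕ → ℂ[X]} (hC : IsUltra C) {q : ℂ} (h : Good (q^2)) (hq : q ≠ 0)
    (L n j i : ℕ) : Dp q i (n+j) (pp q L C n j i) (pp q L C n j (i+1)) := by
  apply Dp_sum
  intro k hk
  have := Finset.mem_range.1 hk
  exact pt_D hC h hq L n j i k (by omega)
lemma Dp_asym {q : ℂ} (hq : q ≠ 0) {i N : ℕ} {f g : ℂ[X]} (h : Dp q i N f g) (e : ℕ)
    (hf : f.natDegree ≤ e) (hg : g.natDegree ≤ e+1) :
    f.coeff e * (q^(1-(N:ℤ)) + q^((N:ℤ)+3) - q^((e:ℤ)+i+3) - q^(1-(i:ℤ)-e)) =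
    g.coeff (e+1) / 2 * q^(1-(i:ℤ)) * (1-(q^2)^(i+1)) * (q^(e+1) - (q^(e+1))⁻¹) := by
  have := ext_zero (fun w => q^(1-(i:ℤ)) * ((w^2-(q^2)^(i+1)) * HH f e q w + ((q^2)^(i+1)*w^2-1) * HH f e q⁻¹ w)
   - q^(1-(i:ℤ)) * (1-(q^2)^(i+1)) * (HH g (e+1) q w - HH g (e+1) q⁻¹ w))
   (fun w => (q^(1-(N:ℤ)) + q^((N:ℤ)+3)) * (w^2-1) * HH f e 1 w)
   (by have := HH_cont f e q; have := HH_cont f e q⁻¹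
       have := HH_cont g (e+1) q; have := HH_cont g (e+1) q⁻¹
       fun_prop)
   (by have := HH_cont f e 1; fun_prop) (by
    intro w hw
    have := h w⁻¹ (inv_ne_zero hw)
    have hq' := inv_ne_zero hq
    rw [HH_ev f e hf q w hq hw, HH_ev f e hf _ w hq' hw, HH_ev f e hf _ w one_ne_zero hw,
      HH_ev g (e+1) hg _ w hq hw, HH_ev g (e+1) hg _ w hq' hw, one_mul]
    generalize ev f (q*w⁻¹) = x1 at *
    generalize ev f (q⁻¹*w⁻¹) = x2 at *
    generalize ev f (w⁻¹) = x3 at *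
    generalize ev g (q*w⁻¹) = x4 at *
    generalize ev g (q⁻¹*w⁻¹) = x5 at *
    generalize (q^2)^(i+1) = P at *
    generalize q^(1-(i:ℤ)) = Q at *
    generalize q^(1-(N:ℤ)) + q^((N:ℤ)+3) = R at *
    field_simp at this
    rw [pow_succ]
    linear_combination w^e * this)
  simp only [HH_zero] at this
  rw [one_div, div_pow, div_pow, div_pow, div_pow, inv_pow, inv_pow, inv_pow, pow_succ 2 e] at this
  have e1 : q^((e:ℤ)+i+3) = q^(1-(i:ℤ)) * (q^2)^(i+1) * q^e := by
    rw [← pow_mul, ← zpow_natCast, ← zpow_natCast q e, ← zpow_add₀ hq, ← zpow_add₀ hq]; congr 1; push_cast; ring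
  have e2 : q^(1-(i:ℤ)-e) = q^(1-(i:ℤ)) * (q^e)⁻¹ := by
    rw [← zpow_natCast q e, ← _root_.zpow_neg, ← zpow_add₀ hq]; congr 1
  rw [e1, e2]
  have h2 : (2:ℂ)^e ≠ 0 := pow_ne_zero _ two_ne_zero
  have hqe : q^e ≠ 0 := pow_ne_zero _ hq
  have hqe' : q^(e+1) ≠ 0 := pow_ne_zero _ hq
  generalize q^e = y at *
  generalize q^(e+1) = y' at *
  generalize (2:ℂ)^e = t at *
  generalize (q^2)^(i+1) = P at *
  generalize q^(1-(i:ℤ)) = Q at *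
  generalize q^(1-(N:ℤ)) + q^((N:ℤ)+3) = R at *
  field_simp at this ⊢
  linear_combination this

lemma qR_RR {q : ℂ} (h : Good (q^2)) (hq : q ≠ 0) (L n j k : ℕ) :
    qRacah (q ^ 2) 1 1 (q ^ (-(2 * (n : ℤ) + 2 * (j : ℤ) + 2))) (q ^ (-(2 * (L : ℤ) + 2))) k j =
    RR (q^2) L (n+j) j k := by
  have hz : ∀ a : ℤ, (q^2)^a = q^(2*a) := by
    intro a; rw [← zpow_natCast, ← _root_.zpow_mul]; norm_num
  have hn : ∀ a : ℕ, (q^2)^a = q^(2*(a:ℤ)) := by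
    intro a; rw [← zpow_natCast, hz]
  have e1 : q ^ (-(2 * (n : ℤ) + 2 * (j : ℤ) + 2)) * q ^ (-(2 * (L : ℤ) + 2)) * (q^2)^(j+1) =
      (q^2)^((j:ℤ) - (n+j:ℕ) - L - 1) := by
    rw [hn, hz, ← zpow_add₀ hq, ← zpow_add₀ hq]; congr 1; push_cast; ring
  have e2 : q ^ (-(2 * (L : ℤ) + 2)) * q^2 = (q^2)^(-(L:ℤ)) := by
    rw [hz, ← zpow_natCast, ← zpow_add₀ hq]; congr 1; push_cast; ring
  have e3 : q ^ (-(2 * (n : ℤ) + 2 * (j : ℤ) + 2)) * q^2 = (q^2)^(-((n+j:ℕ):ℤ)) := by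
    rw [hz, ← zpow_natCast, ← zpow_add₀ hq]; congr 1; push_cast; ring
  rw [qRacah, RR]
  simp only [one_mul]
  rw [e1, e2, e3]
  rw [← Finset.sum_subset (s₁ := range (min k j + 1)) (s₂ := range (j+1)) (f := fun s => dd (q^2) L (n+j) j s * ph (q^2) s k)]
  · apply Finset.sum_congr rfl
    intro s _
    rw [dd, ph]; ring
  · intro x hx; rw [Finset.mem_range] at *; omega
  · intro s hs hs'
    rw [Finset.mem_range] at *
    rw [ph_gt h s k (by omega), mul_zero]
def KK (p : ℂ) (L N : ℕ) : ℂ := Ff p L * Ff p (L+1) * (Ff p N)^2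
lemma top_alg (Q1 Q2 Q3 Q4 Q5 Q6 Q7 σ τ R F1 F2 F3 F4 F5 F6 F7 F8 F9 F10 F11 F12 v : ℂ)
    (E : Q1*Q2*Q3*Q4 = Q6*Q7*Q5) (s1 : σ^2 = 1) (s2 : τ^2 = 1) (n1 : F1 ≠ 0) (n2 : F2 ≠ 0)
    (n3 : F3 ≠ 0) (n4 : F4 ≠ 0) (n5 : F5 ≠ 0) (n6 : F6 ≠ 0) (n7 : F7 ≠ 0) (n8 : F8 ≠ 0) (n9 : F9 ≠ 0) (n10 : v ≠ 0) :
    σ*τ*Q1 * (F1*F10/(F2*F3)) * ((σ*τ*Q2*F11/F5)*(σ*τ*Q3*F12/F6)/(F1*(F7/F4))) * (F6/(F8/(F2*v))) * R *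
     (τ*Q4*F1/F3/F9) * (F12/F1/F6) =
    Q6*(F11*F4*F12^2)/F3^2*((Q7*v/(F5*F6*F7*F8))*R*(σ*Q5*F10/F9)) := by
  have m1 : F1 * F1⁻¹ = 1 := mul_inv_cancel₀ n1
  have m2 : F2 * F2⁻¹ = 1 := mul_inv_cancel₀ n2
  have m6 : F6 * F6⁻¹ = 1 := mul_inv_cancel₀ n6
  simp only [div_eq_mul_inv, mul_inv, inv_inv]
  trans (Q1*Q2*Q3*Q4) * (σ*(σ^2)*(τ^2)^2) * (F1 * F1⁻¹)^2 * (F2 * F2⁻¹) * (F6 * F6⁻¹) * (F10*F11*F12*F12*F4*v*R*(F3⁻¹*F3⁻¹*F5⁻¹*F6⁻¹*F7⁻¹*F8⁻¹*F9⁻¹))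
  · ring
  · rw [E, s1, s2, m1, m2, m6]
    ring
lemma top_key {q : ℂ} (h : Good (q^2)) (hq : q ≠ 0) (L n j i k : ℕ) (hi : i ≤ k) (hL : k ≤ L) (hN : k ≤ n + j) :
    cf q L n j i k * ca (q^2) (q^(-(2*(k:ℤ)))) (k-i) * ca (q^2) (q^(2*(k:ℤ)+2)) (n+j-k) =
    q^(n+j+i) * KK (q^2) L (n+j) / (Ff (q^2) i)^2 * (ww (q^2) L (n+j) k * RR (q^2) L (n+j) j k * ph (q^2) i k) := by
  have hz : ∀ a : ℤ, (q^2)^a = q^(2*a) := by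
    intro a; rw [← zpow_natCast, ← _root_.zpow_mul]; norm_num
  have hn : ∀ a : ℕ, (q^2)^a = q^(2*(a:ℤ)) := by
    intro a; rw [← zpow_natCast, hz]
  rw [cf, qR_RR h hq, ca, ca, ph_val rfl h i k hi, ww]
  rw [show q^(-(2*(k:ℤ))) = (q^2)^(-(k:ℤ)) by rw [hz]; congr 1; ring,
    show q^(-(2*(L:ℤ))) = (q^2)^(-(L:ℤ)) by rw [hz]; congr 1; ring,
    show q^(-(2*(j:ℤ)+2*(n:ℤ))) = (q^2)^(-((n+j:ℕ):ℤ)) by rw [hz]; congr 1; push_cast; ring,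
    show q^(2*(k:ℤ)+2) = (q^2)^(k+1) by rw [hn]; rfl,
    show q^(2*(L:ℤ)+4) = (q^2)^(L+1+1) by rw [hn]; congr 1,
    show q^(4*(k:ℤ)+4) = (q^2)^(2*k+1+1) by rw [hn]; congr 1; push_cast; ring]
  rw [qp_down rfl h k (k-i) (by omega), qp_down rfl h L k hL, qp_down rfl h (n+j) k hN, qp_up' h, qp_up' h, qp_up' h]
  change (_ * _ * (Ff (q^2) k * Ff (q^2) (k+i) / (Ff (q^2) (2*k) * Ff (q^2) i)) * (_ / (Ff (q^2) k * _)) * (Ff (q^2) (n+j-k) / _) * _) *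
    (_ / Ff (q^2) (k-i)) * (_ / Ff (q^2) (n+j-k)) = _
  rw [Ff_succ _ (2*k), KK, show k - (k-i) = i by omega, show L+1+k = L+k+1 by ring,
    show 2*k+1+(n+j-k) = n+j+k+1 by omega, show k+(n+j-k) = n+j by omega]
  obtain ⟨d, rfl⟩ := Nat.exists_eq_add_of_le hi
  rw [show i+d-i = d by omega]
  have E : q ^ ((n : ℤ) + (2 * ((i+d:ℕ) : ℤ) + 1) * (((i+d:ℕ) : ℤ) - (i : ℤ)) +
                (j : ℤ) * (2 * ((i+d:ℕ) : ℤ) + 1) + 2 * ((i+d:ℕ) : ℤ) * ((L : ℤ) + (n : ℤ) + 1) -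
                ((i+d:ℕ) : ℤ) ^ 2) * q^(-(2*(L:ℤ)*(i+d:ℕ)) + (i+d:ℕ)*((i+d:ℕ)-1)) *
                q^(-(2*((n+j:ℕ):ℤ)*(i+d:ℕ)) + (i+d:ℕ)*((i+d:ℕ)-1)) *
                q^(-(2*((i+d:ℕ):ℤ)*d) + d*(d-1)) =
        q^(n+j+i) * (q^2)^((i+d)^2) * q^(-(2*((i+d:ℕ):ℤ)*i) + i*(i-1)) := by
    rw [hn, ← zpow_natCast q (n+j+i)]
    simp only [← zpow_add₀ hq]
    congr 1; push_cast; ring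
  generalize q ^ ((n : ℤ) + (2 * ((i+d:ℕ) : ℤ) + 1) * (((i+d:ℕ) : ℤ) - (i : ℤ)) +
                (j : ℤ) * (2 * ((i+d:ℕ) : ℤ) + 1) + 2 * ((i+d:ℕ) : ℤ) * ((L : ℤ) + (n : ℤ) + 1) -
                ((i+d:ℕ) : ℤ) ^ 2) = Q1 at *
  generalize q^(-(2*(L:ℤ)*(i+d:ℕ)) + (i+d:ℕ)*((i+d:ℕ)-1)) = Q2 at *
  generalize q^(-(2*((n+j:ℕ):ℤ)*(i+d:ℕ)) + (i+d:ℕ)*((i+d:ℕ)-1)) = Q3 at *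
  generalize q^(-(2*((i+d:ℕ):ℤ)*d) + d*(d-1)) = Q4 at *
  generalize q^(-(2*((i+d:ℕ):ℤ)*i) + i*(i-1)) = Q5 at *
  generalize q^(n+j+i) = Q6 at *
  generalize (q^2)^((i+d)^2) = Q7 at *
  have s1 : ((-1:ℂ)^i)^2 = 1 := by rw [← pow_mul, mul_comm, pow_mul]; norm_num
  have s2 : ((-1:ℂ)^d)^2 = 1 := by rw [← pow_mul, mul_comm, pow_mul]; norm_num
  rw [pow_add (-1:ℂ)]
  generalize (-1:ℂ)^i = σ at *
  generalize (-1:ℂ)^d = τ at *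
  generalize RR (q^2) L (n+j) j (i+d) = R at *
  have n1 := Ff_ne h (i+d)
  have n2 := Ff_ne h (2*(i+d))
  have n3 := Ff_ne h i
  have n4 := Ff_ne h (L+1)
  have n5 := Ff_ne h (L-(i+d))
  have n6 := Ff_ne h (n+j-(i+d))
  have n7 := Ff_ne h (L+(i+d)+1)
  have n8 := Ff_ne h (n+j+(i+d)+1)
  have n9 := Ff_ne h d
  have n10 := h.pow (2*(i+d))
  generalize Ff (q^2) (i+d) = F1 at *
  generalize Ff (q^2) (2*(i+d)) = F2 at *
  generalize Ff (q^2) i = F3 at *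
  generalize Ff (q^2) (L+1) = F4 at *
  generalize Ff (q^2) (L-(i+d)) = F5 at *
  generalize Ff (q^2) (n+j-(i+d)) = F6 at *
  generalize Ff (q^2) (L+(i+d)+1) = F7 at *
  generalize Ff (q^2) (n+j+(i+d)+1) = F8 at *
  generalize Ff (q^2) d = F9 at *
  generalize Ff (q^2) (i+d+i) = F10 at *
  generalize Ff (q^2) L = F11 at *
  generalize Ff (q^2) (n+j) = F12 at *
  generalize 1 - (q^2)^(2*(i+d)+1) = v at *
  clear h hq hz hn hi hL hN
  have := top_alg Q1 Q2 Q3 Q4 Q5 Q6 Q7 σ τ R F1 F2 F3 F4 F5 F6 F7 F8 F9 F10 F11 F12 v E s1 s2 n1 n2 n3 n4 n5 n6 n7 n8 n9 n10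
  rw [← this]
lemma pt_deg {C : ℂ → ℂ → ℕ → ℂ[X]} (hC : IsUltra C) (q : ℂ) (L n j i k : ℕ) (hk : k ≤ n + j) :
    (pt q L C n j i k).natDegree ≤ n+j-i := by
  have hd : ∀ p β m, (C p β m).natDegree ≤ m := fun p β m => Polynomial.natDegree_le_of_degree_le (hC p β m).1
  rw [pt]
  split_ifs with h
  · refine (Polynomial.natDegree_C_mul_le _ _).trans ?_
    refine Polynomial.natDegree_mul_le.trans ?_
    have := hd (q^2) (q^(-(2*(k:ℤ)))) (k-i)
    have := hd (q^2) (q^(2*(k:ℤ)+2)) (n+j-k)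
    omega
  · simp
lemma pp_deg {C : ℂ → ℂ → ℕ → ℂ[X]} (hC : IsUltra C) (q : ℂ) (L n j i : ℕ) :
    (pp q L C n j i).natDegree ≤ n+j-i := by
  apply Polynomial.natDegree_sum_le_of_forall_le
  intro k hk
  have := Finset.mem_range.1 hk
  exact pt_deg hC q L n j i k (by omega)
lemma pp_zero (q : ℂ) (L : ℕ) (C : ℂ → ℂ → ℕ → ℂ[X]) (n j i : ℕ) (hi : n + j < i) :
    pp q L C n j i = 0 := by
  apply Finset.sum_eq_zero
  intro k hk
  have := Finset.mem_range.1 hk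
  rw [pt, if_neg (by omega)]
lemma pp_top {C : ℂ → ℂ → ℕ → ℂ[X]} (hC : IsUltra C) {q : ℂ} (h : Good (q^2)) (hq : q ≠ 0) (L n j i : ℕ) (hi : i ≤ n+j) :
    (pp q L C n j i).coeff (n+j-i) = 2^(n+j-i) * (q^(n+j+i) * KK (q^2) L (n+j) / (Ff (q^2) i)^2 * Ss (q^2) L (n+j) j i) := by
  have hd : ∀ p β m, (C p β m).natDegree ≤ m := fun p β m => Polynomial.natDegree_le_of_degree_le (hC p β m).1
  rw [pp, Polynomial.finsetSum_coeff, Ss, Finset.mul_sum, Finset.mul_sum]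
  apply Finset.sum_congr rfl
  intro k hk
  have hk := Finset.mem_range.1 hk
  rw [pt]
  split_ifs with hik
  · rw [Polynomial.coeff_C_mul, show n+j-i = (k-i) + (n+j-k) by omega,
      Polynomial.coeff_mul_add_eq_of_natDegree_le (hd _ _ _) (hd _ _ _), C_lead hC, C_lead hC,
      ← top_key h hq L n j i k hik (by omega) (by omega), pow_add]
    ring
  · rw [ph_gt h i k (by omega)]; simp
lemma pp_par {C : ℂ → ℂ → ℕ → ℂ[X]} (hC : IsUltra C) (q : ℂ) (L n j : ℕ) (hn : 1 ≤ n) :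
    (pp q L C n j j).coeff (n-1) = 0 := by
  have e : (pp q L C n j j).comp (-X) = Polynomial.C ((-1)^n) * pp q L C n j j := by
    rw [pp, Polynomial.sum_comp, Finset.mul_sum]
    apply Finset.sum_congr rfl
    intro k hk
    have hk := Finset.mem_range.1 hk
    rw [pt]
    split_ifs with hjk
    · rw [Polynomial.mul_comp, Polynomial.mul_comp, C_par hC, C_par hC, Polynomial.C_comp]
      have : (-1:ℂ)^n = (-1)^(k-j) * (-1)^(n+j-k) := by rw [← pow_add]; congr 1; omega
      rw [this, Polynomial.C_mul]
      ring
    · simp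
  have := congrArg (fun f => f.coeff (n-1)) e
  rw [show (-X : ℂ[X]) = Polynomial.C (-1) * X by simp, Polynomial.comp_C_mul_X_coeff, Polynomial.coeff_C_mul] at this
  obtain ⟨m, rfl⟩ := Nat.exists_eq_add_of_le hn
  rw [show 1+m-1 = m by omega, pow_add] at this
  rw [show 1+m-1 = m by omega]
  rcases neg_one_pow_eq_or ℂ m with h1 | h1 <;> rw [h1] at this
  · have : 2 * (pp q L C (1+m) j j).coeff m = 0 := by linear_combination this
    simpa using this
  · have : 2 * (pp q L C (1+m) j j).coeff m = 0 := by linear_combination -this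
    simpa using this

/-- diagonal entry of the leading coefficient -/
def Gv (q : ℂ) (L n j : ℕ) : ℂ := 2 ^ n * q ^ n * qp (q ^ (2 * (j : ℤ) + 2)) (q ^ 2) n *
        qp (q ^ (2 * (L : ℤ) - 2 * (j : ℤ) + 2)) (q ^ 2) n /
      (qp (q ^ 2) (q ^ 2) n * qp (q ^ (2 * (L : ℤ) + 4)) (q ^ 2) n)
lemma Gv_eq {q : ℂ} (h : Good (q^2)) (L n j : ℕ) (hj : j ≤ L) :
    Gv q L n j = 2^n * q^n * (Ff (q^2) (j+n) / Ff (q^2) j) * (Ff (q^2) (L-j+n) / Ff (q^2) (L-j)) /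
      (Ff (q^2) n * (Ff (q^2) (L+1+n) / Ff (q^2) (L+1))) := by
  have hn : ∀ a : ℕ, (q^2)^a = q^(2*(a:ℤ)) := by
    intro a; rw [← pow_mul, ← zpow_natCast]; push_cast; rfl
  rw [Gv, show q ^ (2 * (j : ℤ) + 2) = (q^2)^(j+1) by rw [hn]; congr 1,
    show q ^ (2 * (L : ℤ) - 2 * (j : ℤ) + 2) = (q^2)^(L-j+1) by rw [hn]; congr 1; push_cast [hj]; ring,
    show q ^ (2 * (L : ℤ) + 4) = (q^2)^(L+1+1) by rw [hn]; congr 1,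
    qp_up' h, qp_up' h, qp_up' h]
  rfl
lemma Gv_ne {q : ℂ} (h : Good (q^2)) (hq : q ≠ 0) (L n j : ℕ) (hj : j ≤ L) : Gv q L n j ≠ 0 := by
  rw [Gv_eq h L n j hj]
  have := fun k => Ff_ne h k
  exact div_ne_zero (mul_ne_zero (mul_ne_zero (mul_ne_zero (by simp) (pow_ne_zero _ hq)) (div_ne_zero (this _) (this _)))
    (div_ne_zero (this _) (this _))) (mul_ne_zero (this _) (div_ne_zero (this _) (this _)))
lemma pp_lead {C : ℂ → ℂ → ℕ → ℂ[X]} (hC : IsUltra C) {q : ℂ} (h : Good (q^2)) (hq : q ≠ 0) (L n j : ℕ) (hj : j ≤ L) :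
    (pp q L C n j j).coeff n = Gv q L n j := by
  have t := pp_top hC h hq L n j j (by omega)
  rw [show n+j-j = n by omega] at t
  rw [t, Gv_eq h L n j hj, Ss_val rfl h L (n+j) j hj (by omega), KK]
  rw [show n+j-j = n by omega, show L+n+1 = L+1+n by ring, show j+n = n+j by ring]
  have e : q^(n+j+j) = q^n * (q^2)^j := by rw [← pow_mul, ← pow_add]; congr 1; ring
  rw [e]
  have n0 : (q^2)^j ≠ 0 := pow_ne_zero _ h.1
  have n1 := Ff_ne h L
  have n2 := Ff_ne h (L+1)
  have n3 := Ff_ne h (n+j)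
  have n4 := Ff_ne h j
  have n5 := Ff_ne h (L-j)
  have n6 := Ff_ne h n
  have n7 := Ff_ne h (L+1+n)
  generalize Ff (q^2) L = F1 at *
  generalize Ff (q^2) (L+1) = F2 at *
  generalize Ff (q^2) (n+j) = F3 at *
  generalize Ff (q^2) j = F4 at *
  generalize Ff (q^2) (L-j) = F5 at *
  generalize Ff (q^2) n = F6 at *
  generalize Ff (q^2) (L+1+n) = F7 at *
  generalize Ff (q^2) (L-j+n) = F8 at *
  generalize (q^2)^j = y at *
  field_simp
lemma fac_ne {q : ℂ} (h : Good (q^2)) (hq : q ≠ 0) (N e i : ℕ) (hne : e + i ≠ N) :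
    q^(1-(N:ℤ)) + q^((N:ℤ)+3) - q^((e:ℤ)+i+3) - q^(1-(i:ℤ)-e) ≠ 0 := by
  have hx : q^N ≠ 0 := pow_ne_zero _ hq
  have hy : q^(e+i) ≠ 0 := pow_ne_zero _ hq
  have e1 : q^(1-(N:ℤ)) = q * (q^N)⁻¹ := by rw [zpow_sub₀ hq]; simp [div_eq_mul_inv]
  have e2 : q^((N:ℤ)+3) = q^3 * q^N := by rw [zpow_add₀ hq, mul_comm]; norm_cast
  have e3 : q^((e:ℤ)+i+3) = q^3 * q^(e+i) := by
    rw [show (e:ℤ)+i+3 = ((e+i:ℕ):ℤ)+3 by push_cast; ring, zpow_add₀ hq, mul_comm]; norm_cast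
  have e4 : q^(1-(i:ℤ)-e) = q * (q^(e+i))⁻¹ := by
    rw [show (1-(i:ℤ)-e) = 1 - ((e+i:ℕ):ℤ) by push_cast; ring, zpow_sub₀ hq, zpow_natCast, zpow_one, div_eq_mul_inv]
  have hxy : q^(e+i) - q^N ≠ 0 := by
    intro h0
    have h1 : q^(e+i) = q^N := sub_eq_zero.1 h0
    apply h.2 (((e+i:ℕ):ℤ)-N) (by omega)
    rw [zpow_sub₀ h.1, zpow_natCast, zpow_natCast, ← pow_mul, ← pow_mul, mul_comm 2, mul_comm 2, pow_mul, pow_mul, h1]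
    exact div_self (pow_ne_zero _ hx)
  have h3 : 1 - q^2 * q^N * q^(e+i) ≠ 0 := by
    intro h0
    have h1 : q^(2+N+(e+i)) = 1 := by rw [pow_add, pow_add]; linear_combination -h0
    apply h.2 ((2+N+(e+i):ℕ):ℤ) (by omega)
    rw [zpow_natCast, ← pow_mul, mul_comm, pow_mul, h1, one_pow]
  have : q^(1-(N:ℤ)) + q^((N:ℤ)+3) - q^((e:ℤ)+i+3) - q^(1-(i:ℤ)-e) =
    q * (q^(e+i) - q^N) * (1 - q^2 * q^N * q^(e+i)) / (q^N * q^(e+i)) := by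
    rw [e1, e2, e3, e4]
    generalize q^N = x at *
    generalize q^(e+i) = y at *
    field_simp
    ring
  rw [this]
  exact div_ne_zero (mul_ne_zero (mul_ne_zero hq hxy) h3) (mul_ne_zero hx hy)
lemma pp_low {C : ℂ → ℂ → ℕ → ℂ[X]} (hC : IsUltra C) {q : ℂ} (h : Good (q^2)) (hq : q ≠ 0) (L n j : ℕ) (hj : j ≤ L)
    (d : ℕ) : ∀ i, i + d = j → ∀ m, n < m + d → (pp q L C n j i).coeff m = 0 := by
  induction d with
  | zero =>
    intro i hi m hm
    apply Polynomial.coeff_eq_zero_of_natDegree_lt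
    have := pp_deg hC q L n j i
    omega
  | succ d ih =>
    intro i hi m hm
    have ih := ih (i+1) (by omega)
    have main : ∀ t m, m + t = n+d+1 → n < m + (d+1) → (pp q L C n j i).coeff m = 0 := by
      intro t
      induction t using Nat.strong_induction_on with
      | _ t iht =>
        intro m hmt hm
        have hdeg := pp_deg hC q L n j i
        rcases Nat.eq_zero_or_pos t with ht | ht
        · have := pp_top hC h hq L n j i (by omega)
          rw [show n+j-i = m by omega] at this
          rw [this, Ss_lt h L (n+j) j i hj (by omega) (by omega)]
          simp
        · have hf : (pp q L C n j i).natDegree ≤ m := by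
            rw [Polynomial.natDegree_le_iff_coeff_eq_zero]
            intro m' hm'
            by_cases hc : m' ≤ n+d+1
            · exact iht (n+d+1-m') (by omega) m' (by omega) (by omega)
            · apply Polynomial.coeff_eq_zero_of_natDegree_lt; omega
          have hg : (pp q L C n j (i+1)).natDegree ≤ m+1 := by
            rw [Polynomial.natDegree_le_iff_coeff_eq_zero]
            intro m' hm'
            exact ih m' (by omega)
          have := Dp_asym hq (pp_D hC h hq L n j i) m hf hg
          rw [ih (m+1) (by omega)] at this
          simp only [zero_div, zero_mul] at this
          exact (mul_eq_zero.1 this).resolve_right (fac_ne h hq (n+j) m i (by omega))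
    by_cases hc : m ≤ n+d+1
    · exact main (n+d+1-m) m (by omega) hm
    · apply Polynomial.coeff_eq_zero_of_natDegree_lt
      have hdeg := pp_deg hC q L n j i
      omega
lemma pp_sub {C : ℂ → ℂ → ℕ → ℂ[X]} (hC : IsUltra C) {q : ℂ} (h : Good (q^2)) (hq : q ≠ 0) (L m i : ℕ) (hj : i+1 ≤ L) :
    (pp q L C (m+1) (i+1) i).coeff m = -(q / 2 * ((1 - q ^ (2 * (m+1))) * (1 - q ^ (2 * i + 2))) /
            ((1 - q ^ 2) * (1 - q ^ (2 * (m+1) + 2 * i + 2)))) * Gv q L (m+1) (i+1) := by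
  have hf : (pp q L C (m+1) (i+1) i).natDegree ≤ m := by
    rw [Polynomial.natDegree_le_iff_coeff_eq_zero]
    intro m' hm'
    exact pp_low hC h hq L (m+1) (i+1) hj 1 i rfl m' (by omega)
  have hg : (pp q L C (m+1) (i+1) (i+1)).natDegree ≤ m+1 := by
    have := pp_deg hC q L (m+1) (i+1) (i+1)
    omega
  have := Dp_asym hq (pp_D hC h hq L (m+1) (i+1) i) m hf hg
  rw [pp_lead hC h hq L (m+1) (i+1) hj] at this
  have n1 : 1 - q^2 ≠ 0 := by have := h.pow 0; simpa using this
  have n2 : 1 - q ^ (2 * (m+1) + 2 * i + 2) ≠ 0 := by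
    have := h.pow (m+i+1)
    rw [← pow_mul] at this
    rwa [show 2 * (m+1) + 2 * i + 2 = 2*(m+i+1+1) by ring]
  have hs : q^(m+i+1) ≠ 0 := pow_ne_zero _ hq
  have e1 : q^(1-((m+1+(i+1):ℕ):ℤ)) * q^(m+i+1) = 1 := by
    rw [← zpow_natCast, ← zpow_add₀ hq]; convert zpow_zero q using 2; push_cast; ring
  have e2 : q^(((m+1+(i+1):ℕ):ℤ)+3) * q^(m+i+1) = q^(2*m+2*i+6) := by
    rw [← zpow_natCast, ← zpow_natCast, ← zpow_add₀ hq]; congr 1; push_cast; ring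
  have e3 : q^((m:ℤ)+i+3) * q^(m+i+1) = q^(2*m+2*i+4) := by
    rw [← zpow_natCast, ← zpow_natCast, ← zpow_add₀ hq]; congr 1; push_cast; ring
  have e4 : q^(1-(i:ℤ)-m) * q^(m+i+1) = q^2 := by
    rw [← zpow_natCast, ← zpow_natCast, ← zpow_add₀ hq]; congr 1; push_cast; ring
  have e5 : q^(1-(i:ℤ)) * q^(m+i+1) = q * q^(m+1) := by
    rw [← pow_succ', ← zpow_natCast, ← zpow_natCast, ← zpow_add₀ hq]; congr 1; push_cast; ring
  have e6 : q^(m+1) * (q^(m+1))⁻¹ = 1 := mul_inv_cancel₀ (pow_ne_zero _ hq)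
  have e7 : (q^2)^(i+1) = q^(2*i+2) := by rw [← pow_mul]; congr 1
  rw [e7] at this
  rw [show ∀ a b c d : ℂ, -(a/2*(b*c)/d) * Gv q L (m+1) (i+1) = -(a/2*(b*c)) * Gv q L (m+1) (i+1) / d by intros; ring,
    eq_div_iff (mul_ne_zero n1 n2)]
  have E1 : q^(2*(m+1)) = q^(m+1) * q^(m+1) := by rw [← pow_add]; congr 1; ring
  have E2 : (1 - q ^ 2) * (1 - q ^ (2 * (m+1) + 2 * i + 2)) = (q^(1-((m+1+(i+1):ℕ):ℤ)) + q^(((m+1+(i+1):ℕ):ℤ)+3) -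
     q^((m:ℤ)+i+3) - q^(1-(i:ℤ)-m)) * q^(m+i+1) := by
    linear_combination -e1 - e2 + e3 + e4
  rw [E2, ← mul_assoc, this, E1]
  generalize Gv q L (m+1) (i+1) = G at *
  generalize q^(2*i+2) = y at *
  generalize hw : q^(m+1) = w at *
  generalize q^(1-(i:ℤ)) = r at *
  generalize q^(m+i+1) = s at *
  linear_combination G/2*(1-y)*(w - w⁻¹) * e5 - G/2*(1-y)*q * e6
lemma pp_sup {C : ℂ → ℂ → ℕ → ℂ[X]} (hC : IsUltra C) {q : ℂ} (h : Good (q^2)) (hq : q ≠ 0) (m j l : ℕ) :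
    (pp q (j+1+l) C (m+1) j (j+1)).coeff m = -(q / 2 * ((1 - q ^ (2 * (m+1))) * (1 - q ^ (2 * (l+1)))) /
            ((1 - q ^ 2) * (1 - q ^ (2 * (l+m+1+1))))) * Gv q (j+1+l) (m+1) j := by
  have a := pp_top hC h hq (j+1+l) (m+1) j (j+1) (by omega)
  have b := pp_top hC h hq (j+1+l) (m+1) j j (by omega)
  have c := Ss_step h j 0 l m
  rw [show m+1+j-(j+1) = m by omega] at a
  rw [show m+1+j-j = m+1 by omega, pp_lead hC h hq _ _ _ (by omega)] at b
  rw [a, b, show m+1+j = j+1+m by ring]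
  simp only [add_zero, zero_add, pow_zero, pow_one] at c
  rw [Ff_succ]
  have n0 := h.pow 0
  have n1 := h.pow (l+m+1)
  have n2 := h.pow j
  have n3 := Ff_ne h j
  rw [zero_add, pow_one] at n0
  have e : ∀ a, q^(2*a) = (q^2)^a := fun a => pow_mul q 2 a
  rw [e, e, e, show q^(j+1+m+(j+1)) = q * q^(j+1+m+j) by ring, pow_succ 2 m]
  have c' : Ss (q^2) (j+1+l) (j+1+m) j (j+1) = -(1-(q^2)^(j+1))^2*(1-(q^2)^(l+1))*(1-(q^2)^(m+1)) *
     Ss (q^2) (j+1+l) (j+1+m) j j / ((1-q^2)*(1-(q^2)^(l+m+1+1))) := by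
    rw [eq_div_iff (mul_ne_zero n0 n1), c]; ring
  rw [c']
  clear c c' a b e
  generalize Ss (q^2) (j+1+l) (j+1+m) j j = S at *
  generalize KK (q^2) (j+1+l) (j+1+m) = K at *
  generalize Ff (q^2) j = F at *
  generalize q^(j+1+m+j) = Q at *
  generalize (2:ℂ)^m = t at *
  generalize 1-(q^2)^(j+1) = v1 at *
  generalize 1-(q^2)^(l+1) = v2 at *
  generalize 1-(q^2)^(m+1) = v3 at *
  generalize 1-(q^2)^(l+m+1+1) = v4 at *
  generalize 1-q^2 = v5 at *
  field_simp
lemma good_real (q : ℝ) (hq0 : 0 < q) (hq1 : q < 1) : Good ((q:ℂ)^2) := by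
  refine ⟨pow_ne_zero _ (by exact_mod_cast hq0.ne'), ?_⟩
  intro m hm h1
  have h2 : (q^2)^m = (1:ℝ) := by exact_mod_cast h1
  have h3 : 0 < q^2 := by positivity
  have h4 : q^2 ≠ 1 := by nlinarith
  rw [zpow_eq_one_iff_right₀ h3.le h4] at h2
  exact hm h2

/-- the coefficient of `x^{n-1}` in the monic polynomial
`Q_n(x) = P_n(x) Γ_n⁻¹` has the stated tridiagonal form (nonzero only on the sub- and
superdiagonal). -/
theorem stmt14 (q : ℝ) (hq0 : 0 < q) (hq1 : q < 1) (L : ℕ)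
    (C : ℂ → ℂ → ℕ → Polynomial ℂ) (hC : IsUltra C) (n : ℕ) (hn : 1 ≤ n) :
    ∀ i j : Fin (L + 1),
      ((Pm (q : ℂ) L C n * ((Gam (q : ℂ) L n)⁻¹).map Polynomial.C) i j).coeff (n - 1) =
        if (j : ℕ) = (i : ℕ) + 1 then
          -((q : ℂ) / 2 * ((1 - (q : ℂ) ^ (2 * n)) * (1 - (q : ℂ) ^ (2 * (i : ℕ) + 2))) /
            ((1 - (q : ℂ) ^ 2) * (1 - (q : ℂ) ^ (2 * n + 2 * (i : ℕ) + 2))))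
        else if (i : ℕ) = (j : ℕ) + 1 then
          -((q : ℂ) / 2 *
              ((1 - (q : ℂ) ^ (2 * n)) *
                (1 - (q : ℂ) ^ (2 * (L : ℤ) - 2 * ((i : ℕ) : ℤ) + 2))) /
            ((1 - (q : ℂ) ^ 2) *
              (1 - (q : ℂ) ^ (2 * (L : ℤ) - 2 * ((i : ℕ) : ℤ) + 2 * (n : ℤ) + 2))))
        else 0 := by
  have h := good_real q hq0 hq1
  have hq : (q:ℂ) ≠ 0 := by exact_mod_cast hq0.ne'
  intro i j
  generalize (q:ℂ) = q at *
  have hG : (Gam q L n)⁻¹ = Matrix.diagonal (fun i : Fin (L+1) => (Gv q L n i)⁻¹) := by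
    apply Matrix.inv_eq_right_inv
    have : Gam q L n = Matrix.diagonal (fun i : Fin (L+1) => Gv q L n i) := rfl
    rw [this, Matrix.diagonal_mul_diagonal, ← Matrix.diagonal_one]
    congr 1
    funext i
    exact mul_inv_cancel₀ (Gv_ne h hq L n i (by omega))
  have hne := Gv_ne h hq L n j (by omega)
  rw [hG, Matrix.diagonal_map (by simp), Matrix.mul_diagonal, Pm_pp, Polynomial.coeff_mul_C]
  rw [← div_eq_mul_inv, div_eq_iff hne]
  have hi := i.2
  have hj := j.2
  clear hG
  generalize (i:ℕ) = a at *
  generalize (j:ℕ) = b at *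
  obtain ⟨m, rfl⟩ := Nat.exists_eq_add_of_le' hn
  rw [show m+1-1 = m by omega]
  split_ifs with h1 h2
  · subst h1
    exact pp_sub hC h hq L m a (by omega)
  · subst h2
    obtain ⟨l, rfl⟩ : ∃ l, L = b+1+l := ⟨L-(b+1), by omega⟩
    rw [pp_sup hC h hq m b l]
    have z1 : q ^ (2 * ((b+1+l:ℕ) : ℤ) - 2 * ((b+1:ℕ) : ℤ) + 2) = q^(2*(l+1)) := by
      rw [← zpow_natCast]; congr 1; push_cast; ring
    have z2 : q ^ (2 * ((b+1+l:ℕ) : ℤ) - 2 * ((b+1:ℕ) : ℤ) + 2 * ((m+1:ℕ):ℤ) + 2) = q^(2*(l+m+1+1)) := by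
      rw [← zpow_natCast]; congr 1; push_cast; ring
    rw [z1, z2]
  · rw [zero_mul]
    rcases lt_trichotomy a b with h3 | h3 | h3
    · exact pp_low hC h hq L (m+1) b (by omega) (b-a) a (by omega) m (by omega)
    · subst h3
      exact pp_par hC q L (m+1) a (by omega)
    · by_cases h4 : m + 1 + b < a
      · rw [pp_zero _ _ _ _ _ _ h4]; simp
      · apply Polynomial.coeff_eq_zero_of_natDegree_lt
        have := pp_deg hC q L (m+1) b a
        omega

end
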